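/- arXiv:2511.21571 — 2 statements merged into one kernel-verified Lean document; each statement's English description precedes it below -/
import Mathlib

section
/- Let α ∈ [0,1], let F be an ordered graph, and let d ↦ (R(m,d))_{m} be any family of graphs, where R(m,d) has vertex set {0,1}^d × [m], such that for every d ∈ ℕ and every ε > 0, R(m,d) satisfies properties (i) and (ii) with accuracy ε for all sufficiently large m. Suppose that for every ε > 0 there exists d₀ such that for all d ≥ d₀, every graph G on {0,1}^d satisfying (1/d)·Σ_{ℓ=1}^{d} e_ℓ(G)/τ_{ℓ,d} ≥ α + ε contains an ordered copy of F. Then for every ε > 0 there exists d₁ such that for every d ≥ d₁ there exists m₁ with ρ_<(F, R(m,d)) ≤ α + ε for all m ≥ m₁; that is, lim_{d→∞} lim_{m→∞} ρ_<(F, R(m,d)) ≤ α. -/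
/-!
The idea is to pass from a dense subgraph of `R(m, d)` to a reduced graph on the cube by a
regularity argument, and then to embed `F` greedily.

Let `G'` be a subgraph of `R(m, d)` with more than `(a + ε) e(R)` edges. We look for a *box*, that
is a choice of a nonempty subset `P x` of `[m]` for each `x` in the cube, maximising
`∑_{x < y} max (d(P x, P y) - θ) 0 + μ ∑_x log |P x|`,
where `d` is the edge density in `G'` and `θ = 2 ^ (-d - 1)`. Such a box has three properties.

* Compared with the full box, the first sum does not decrease, since the logarithms are largest for
  the full box.
* Every `P x` has size at least `κ m` with `κ > 0` independent of `m`, since the first sum is bounded.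
* Every pair of density above `θ` is lower regular (`regular_of_maximal`). If large `A ⊆ P x` and
  `B ⊆ P y` had density below `θ / 2`, we could split `P x` along `A` and `P y` along `B`. By
  convexity of `t ↦ max (t - θ) 0` the first sum does not decrease on average over the four
  resulting boxes, and the pair `(A, B)` gives a gain of order `θ c ^ 2`, which exceeds the
  average loss in the logarithms when `μ` is small. So one of the boxes would be better.

The reduced graph joins `x` and `y` when `d(P x, P y) > θ`. As `κ m ≥ m ^ (2/3)` for large `m`,
property (ii) bounds its densities at level `ℓ` by `(1 + δ) 2 ^ (ℓ - d)`. Property (i) says that all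
levels of `R` have the same number of edges, and the weights `1 / τ` in the hypothesis are exactly
proportional to `2 ^ (ℓ - d)`. Hence the normalised level sum of the reduced graph is at least
`a + ε / 4` once `d` is large (`levelSum_reducedGraph`); the edges inside blocks and the
threshold `θ` cost only `O(1 / d)`.

By hypothesis the reduced graph contains an ordered copy of `F`. Lower regularity gives an increasing
tuple of `|F|` vertices in each `P x` such that tuples over adjacent vertices of the reduced graph are
completely joined in `G'` (`exists_tuples`). If the copy uses an isolated vertex of the reduced
graph, the corresponding block may contain no vertex of `G'`. Therefore isolated vertices of `F`
are moved to blocks that do have edges, which is why a tuple rather than a single vertex per block is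
needed (`containsOrderedCopy_of_tuples`).
-/

open scoped Classical

/-- `G` contains an ordered copy of `F`: a strictly order-preserving map
sending edges to edges. -/
def ContainsOrderedCopy {α β : Type*} [Preorder α] [Preorder β]
    (F : SimpleGraph α) (G : SimpleGraph β) : Prop :=
  ∃ φ : α → β, StrictMono φ ∧ ∀ u v, F.Adj u v → G.Adj (φ u) (φ v)

/-- The number of edges of a simple graph. -/
noncomputable def edgeCount {α : Type*} (G : SimpleGraph α) : ℕ := G.edgeSet.ncard

/-- `ρ_<(F, G)`: the largest edge-density of an `F`-free (ordered) subgraph of `G`. -/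
noncomputable def relTuranDensityIn {α β : Type*} [Preorder α] [Preorder β]
    (F : SimpleGraph α) (G : SimpleGraph β) : ℝ :=
  sSup {r : ℝ | ∃ G' : G.Subgraph, ¬ ContainsOrderedCopy F G'.coe ∧
    r = (edgeCount G'.coe : ℝ) / (edgeCount G : ℝ)}

/-- `ρ_<(F)`: the relative Turán density of an ordered graph `F`, the infimum of
`ρ_<(F, G)` over all finite ordered graphs `G` with at least one edge. -/
noncomputable def relTuranDensity {α : Type*} [Preorder α] (F : SimpleGraph α) : ℝ :=
  sInf {r : ℝ | ∃ (n : ℕ) (G : SimpleGraph (Fin n)),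
    1 ≤ edgeCount G ∧ r = relTuranDensityIn F G}

/-- The cube `{0,1}^d`, ordered lexicographically (index `0` most significant). -/
abbrev Cube (d : ℕ) := Lex (Fin d → Bool)

noncomputable instance (priority := 2000) (d : ℕ) : LinearOrder (Cube d) :=
  haveI : WellFoundedLT (Fin d) := inferInstance
  inferInstance

instance instFintypeLexSelf {α : Type*} [Fintype α] : Fintype (Lex α) := ‹Fintype α›

/-- `δ(x, y) = ℓ`, with positions `1`-indexed: the least (1-indexed) coordinate at which
`x` and `y` differ is `ℓ`. -/
def atLevel {d : ℕ} (ℓ : ℕ) (x y : Cube d) : Prop :=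
  ∃ i : Fin d, (i : ℕ) + 1 = ℓ ∧ ofLex x i ≠ ofLex y i ∧ ∀ j < i, ofLex x j = ofLex y j

/-- `e_ℓ(G)`: the number of level-`ℓ` edges of a graph `G` on `{0,1}^d`. -/
noncomputable def levelCount {d : ℕ} (G : SimpleGraph (Cube d)) (ℓ : ℕ) : ℕ :=
  {p : Cube d × Cube d | p.1 < p.2 ∧ G.Adj p.1 p.2 ∧ atLevel ℓ p.1 p.2}.ncard

/-- `τ_{ℓ,d} = 2 ^ (2d - ℓ - 1)`. -/
def tau (d ℓ : ℕ) : ℕ := 2 ^ (2 * d - ℓ - 1)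

/-- The level `ℓ` is `α`-rich with respect to `G`, i.e. `e_ℓ(G) ≥ α · τ_{ℓ,d}`. -/
def IsRichLevel {d : ℕ} (G : SimpleGraph (Cube d)) (α : ℝ) (ℓ : ℕ) : Prop :=
  α * (tau d ℓ : ℝ) ≤ (levelCount G ℓ : ℝ)

/-- `G` is `(α, C)`-rich: at least `C` levels `ℓ ∈ [d]` are `α`-rich. -/
def IsRichGraph {d : ℕ} (G : SimpleGraph (Cube d)) (α C : ℝ) : Prop :=
  C ≤ ({ℓ : ℕ | ℓ ∈ Finset.Icc 1 d ∧ IsRichLevel G α ℓ}.ncard : ℝ)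

/-- The vertex set `{0,1}^d × [m]`, ordered lexicographically. -/
abbrev BlockVert (d m : ℕ) := Lex (Cube d × Fin m)

/-- `e_ℓ(R)` for a graph `R` on `{0,1}^d × [m]`: the number of edges whose endpoints lie in
blocks `B_x`, `B_y` with `δ(x,y) = ℓ`. -/
noncomputable def levelCountB {d m : ℕ} (R : SimpleGraph (BlockVert d m)) (ℓ : ℕ) : ℕ :=
  {p : BlockVert d m × BlockVert d m |
    p.1 < p.2 ∧ R.Adj p.1 p.2 ∧ atLevel ℓ (ofLex p.1).1 (ofLex p.2).1}.ncard

/-- Property (i) with accuracy `ε`: every level `ℓ ∈ [d]` has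
`(1−ε)·2^(d−1)·m² ≤ e_ℓ(R) ≤ (1+ε)·2^(d−1)·m²`. -/
def PropI {d m : ℕ} (R : SimpleGraph (BlockVert d m)) (ε : ℝ) : Prop :=
  ∀ ℓ ∈ Finset.Icc 1 d,
    (1 - ε) * 2 ^ (d - 1) * (m : ℝ) ^ 2 ≤ (levelCountB R ℓ : ℝ) ∧
    (levelCountB R ℓ : ℝ) ≤ (1 + ε) * 2 ^ (d - 1) * (m : ℝ) ^ 2

/-- Property (ii) with accuracy `ε`: for all distinct `x, y ∈ {0,1}^d` (say `δ(x,y) = ℓ`) and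
all `P ⊆ B_x`, `Q ⊆ B_y` of size at least `m^(2/3)`, the number of edges of `R` between `P`
and `Q` is at most `(1+ε)·2^(−d+ℓ)·|P|·|Q|`. -/
def PropII {d m : ℕ} (R : SimpleGraph (BlockVert d m)) (ε : ℝ) : Prop :=
  ∀ (x y : Cube d) (ℓ : ℕ), atLevel ℓ x y →
    ∀ P Q : Finset (Fin m),
      (m : ℝ) ^ ((2 : ℝ)/3) ≤ (P.card : ℝ) → (m : ℝ) ^ ((2 : ℝ)/3) ≤ (Q.card : ℝ) →
      ({pq : Fin m × Fin m | pq.1 ∈ P ∧ pq.2 ∈ Q ∧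
          R.Adj (toLex (x, pq.1)) (toLex (y, pq.2))}.ncard : ℝ) ≤
        (1 + ε) * 2 ^ ((ℓ : ℤ) - (d : ℤ)) * (P.card : ℝ) * (Q.card : ℝ)

/-- `F` contains a monotone path of length two: vertices `u < v < w` with
`uv, vw ∈ E(F)`. -/
def HasMonotonePathTwo {α : Type*} [Preorder α] (F : SimpleGraph α) : Prop :=
  ∃ u v w, u < v ∧ v < w ∧ F.Adj u v ∧ F.Adj v w

/-- The ordered graph `H_k` on `[k] × {0,1}` (ordered lexicographically), with edges
`(x,0)(y,1)` for `x ≤ y`. -/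
def Hgraph (k : ℕ) : SimpleGraph (Lex (Fin k × Bool)) :=
  SimpleGraph.fromRel (fun a b =>
    (ofLex a).2 = false ∧ (ofLex b).2 = true ∧ (ofLex a).1 ≤ (ofLex b).1)

/-! ### Regular boxes -/

/-- The number of pairs `(a, b) ∈ A × B` related by `r`, minus `θ |A| |B|`. It is written as a
double sum because additivity in `A` and in `B` is what the argument uses. -/
noncomputable def excess {β : Type*} (θ : ℝ) (r : β → β → Prop) (A B : Finset β) : ℝ :=
  ∑ a ∈ A, ∑ b ∈ B, ((if r a b then 1 else 0) - θ)

/-- `max (d(A, B) - θ) 0`, where `d(A, B)` is the density of `r` between `A` and `B`;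
it is `0` when `A` or `B` is empty. -/
noncomputable def excessDensity {β : Type*} (θ : ℝ) (r : β → β → Prop) (A B : Finset β) : ℝ :=
  max 0 (excess θ r A B) / ((A.card : ℝ) * (B.card : ℝ))

/-- The potential of a box `P = (P x)`: the total excess density over the pairs in `S`, plus
`μ ∑ log |P x|`. The logarithmic term keeps the sides of a maximising box large. -/
noncomputable def potential {V β : Type*} [Fintype V] (θ μ : ℝ) (r : V → V → β → β → Prop)
    (S : Finset (V × V)) (P : V → Finset β) : ℝ :=
  ∑ p ∈ S, excessDensity θ (r p.1 p.2) (P p.1) (P p.2) + μ * ∑ x, Real.log (P x).card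

section Box

variable {V β : Type*} [Fintype V] {θ μ : ℝ}

theorem excess_split_left (r : β → β → Prop) {A P : Finset β} (h : A ⊆ P) (B : Finset β) :
    excess θ r P B = excess θ r A B + excess θ r (P \ A) B := by
  unfold excess
  rw [add_comm, Finset.sum_sdiff h]

theorem excess_split_right (r : β → β → Prop) (A : Finset β) {B P : Finset β} (h : B ⊆ P) :
    excess θ r A P = excess θ r A B + excess θ r A (P \ B) := by
  unfold excess
  rw [← Finset.sum_add_distrib]
  refine Finset.sum_congr rfl fun a _ => ?_
  rw [add_comm, Finset.sum_sdiff h]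

theorem excess_comm (r : β → β → Prop) (A B : Finset β) :
    excess θ r A B = excess θ (fun a b => r b a) B A := Finset.sum_comm

theorem excess_eq (r : β → β → Prop) (A B : Finset β) :
    excess θ r A B =
      (((A ×ˢ B).filter fun p => r p.1 p.2).card : ℝ) - θ * (A.card * B.card) := by
  unfold excess
  rw [← Finset.sum_product', Finset.sum_sub_distrib, Finset.card_filter]
  simp
  ring

theorem excessDensity_nonneg (r : β → β → Prop) (A B : Finset β) :
    0 ≤ excessDensity θ r A B := by
  unfold excessDensity
  positivity

theorem excessDensity_comm (r : β → β → Prop) (A B : Finset β) :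
    excessDensity θ r A B = excessDensity θ (fun a b => r b a) B A := by
  unfold excessDensity
  rw [excess_comm, mul_comm (A.card : ℝ)]

theorem card_mul_card_mul_excessDensity (r : β → β → Prop) (A B : Finset β) :
    (A.card : ℝ) * B.card * excessDensity θ r A B = max 0 (excess θ r A B) := by
  unfold excessDensity
  rcases A.eq_empty_or_nonempty with rfl | hA
  · simp [excess]
  rcases B.eq_empty_or_nonempty with rfl | hB
  · simp [excess]
  have := hA.card_pos
  have := hB.card_pos
  field_simp

theorem excessDensity_le_one (hθ : 0 ≤ θ) (r : β → β → Prop) (A B : Finset β) :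
    excessDensity θ r A B ≤ 1 := by
  unfold excessDensity
  refine div_le_one_of_le₀ (max_le (by positivity) ?_) (by positivity)
  rw [excess_eq]
  have h : ((A ×ˢ B).filter fun p => r p.1 p.2).card ≤ A.card * B.card := by
    rw [← Finset.card_product]
    exact Finset.card_filter_le _ _
  have h' : (((A ×ˢ B).filter fun p => r p.1 p.2).card : ℝ) ≤ A.card * B.card := by
    exact_mod_cast h
  have : 0 ≤ θ * (A.card * B.card) := by positivity
  linarith

/-- The excess density does not decrease on average when one side is split in two, because
`t ↦ max (t - θ) 0` is convex. -/
theorem excessDensity_split (r : β → β → Prop) {A P : Finset β} (h : A ⊆ P) (B : Finset β) :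
    (P.card : ℝ) * excessDensity θ r P B ≤
      A.card * excessDensity θ r A B + (P \ A).card * excessDensity θ r (P \ A) B := by
  rcases B.eq_empty_or_nonempty with rfl | hB
  · simp [excessDensity]
  have hB0 : (0 : ℝ) < B.card := by exact_mod_cast hB.card_pos
  refine le_of_mul_le_mul_right ?_ hB0
  have h1 := card_mul_card_mul_excessDensity (θ := θ) r P B
  have h2 := card_mul_card_mul_excessDensity (θ := θ) r A B
  have h3 := card_mul_card_mul_excessDensity (θ := θ) r (P \ A) B
  have h4 := excess_split_left (θ := θ) r h B
  have h5 : max 0 (excess θ r P B) ≤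
      max 0 (excess θ r A B) + max 0 (excess θ r (P \ A) B) := by
    rw [h4]
    refine max_le (by positivity) (add_le_add (le_max_right _ _) (le_max_right _ _))
  nlinarith

/-- Splitting a set in two costs at most `log 2` in the average of the logarithm of its size. -/
theorem log_card_split {A P : Finset β} (h : A ⊆ P) (hP : P.Nonempty) :
    (P.card : ℝ) * Real.log P.card ≤
      A.card * Real.log A.card + (P \ A).card * Real.log (P \ A).card +
        P.card * Real.log 2 := by
  have hn : (0 : ℝ) < P.card := by exact_mod_cast hP.card_pos
  have hsum : (A.card : ℝ) + (P \ A).card = P.card := by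
    have := Finset.card_sdiff_add_card_eq_card h
    exact_mod_cast (by omega : A.card + (P \ A).card = P.card)
  -- `a log (n / 2a) ≤ n / 2 - a`, with both sides harmless at `a = 0`
  have key : ∀ a n : ℝ, 0 ≤ a → 0 < n →
      a * (Real.log n - Real.log 2 - Real.log a) ≤ n / 2 - a := by
    intro a n ha hn
    rcases ha.eq_or_lt with rfl | ha
    · simp; positivity
    have : Real.log n - Real.log 2 - Real.log a = Real.log (n / 2 / a) := by
      rw [Real.log_div (by positivity) (by positivity), Real.log_div (by positivity) (by positivity)]
    rw [this]
    have h1 := Real.log_le_sub_one_of_pos (show 0 < n / 2 / a by positivity)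
    calc a * Real.log (n / 2 / a) ≤ a * (n / 2 / a - 1) := by gcongr
      _ = n / 2 - a := by field_simp
  have h1 := key A.card P.card (by positivity) hn
  have h2 := key (P \ A).card P.card (by positivity) hn
  rw [← hsum] at *
  nlinarith

/-- Splitting one side of a box costs at most `μ log 2` in the average potential. -/
theorem potential_split (hμ : 0 ≤ μ) (r : V → V → β → β → Prop) (S : Finset (V × V))
    (hS : ∀ p ∈ S, p.1 ≠ p.2) (P : V → Finset β) (x : V) (hx : (P x).Nonempty)
    {A : Finset β} (h : A ⊆ P x) :
    ((P x).card : ℝ) * potential θ μ r S P ≤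
      A.card * potential θ μ r S (Function.update P x A) +
      (P x \ A).card * potential θ μ r S (Function.update P x (P x \ A)) +
      (P x).card * (μ * Real.log 2) := by
  have hsum : (A.card : ℝ) + (P x \ A).card = (P x).card := by
    have := Finset.card_sdiff_add_card_eq_card h
    exact_mod_cast (by omega : A.card + (P x \ A).card = (P x).card)
  have h1 : ((P x).card : ℝ) * ∑ p ∈ S, excessDensity θ (r p.1 p.2) (P p.1) (P p.2) ≤
      A.card * ∑ p ∈ S, excessDensity θ (r p.1 p.2)
        (Function.update P x A p.1) (Function.update P x A p.2) +
      (P x \ A).card * ∑ p ∈ S, excessDensity θ (r p.1 p.2)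
        (Function.update P x (P x \ A) p.1) (Function.update P x (P x \ A) p.2) := by
    rw [Finset.mul_sum, Finset.mul_sum, Finset.mul_sum, ← Finset.sum_add_distrib]
    refine Finset.sum_le_sum fun p hp => ?_
    obtain ⟨u, v⟩ := p
    have huv : u ≠ v := hS _ hp
    by_cases hu : u = x
    · subst hu
      have hv : v ≠ u := huv.symm
      simp only [Function.update_self, Function.update_of_ne hv]
      exact excessDensity_split _ h _
    by_cases hv : v = x
    · subst hv
      simp only [Function.update_self, Function.update_of_ne hu]
      rw [excessDensity_comm, excessDensity_comm _ _ A, excessDensity_comm _ _ (P v \ A)]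
      exact excessDensity_split _ h _
    · simp only [Function.update_of_ne hu, Function.update_of_ne hv]
      rw [← hsum]
      exact le_of_eq (by ring)
  have h2 : ((P x).card : ℝ) * ∑ y, Real.log (P y).card ≤
      A.card * ∑ y, Real.log (Function.update P x A y).card +
      (P x \ A).card * ∑ y, Real.log (Function.update P x (P x \ A) y).card +
      (P x).card * Real.log 2 := by
    rw [← Finset.add_sum_erase _ _ (Finset.mem_univ x),
      ← Finset.add_sum_erase _ (fun y => Real.log (Function.update P x A y).card)
        (Finset.mem_univ x),
      ← Finset.add_sum_erase _ (fun y => Real.log (Function.update P x (P x \ A) y).card)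
        (Finset.mem_univ x)]
    have e : ∀ C : Finset β, ∑ y ∈ Finset.univ.erase x,
        Real.log (Function.update P x C y).card =
        ∑ y ∈ Finset.univ.erase x, Real.log (P y).card := by
      intro C
      refine Finset.sum_congr rfl fun y hy => ?_
      rw [Function.update_of_ne (Finset.ne_of_mem_erase hy)]
    rw [e, e]
    simp only [Function.update_self]
    have := log_card_split h hx
    generalize ∑ y ∈ Finset.univ.erase x, Real.log ((P y).card : ℝ) = T at *
    have hT : ((P x).card : ℝ) * T = A.card * T + (P x \ A).card * T := by
      rw [← hsum]; ring
    nlinarith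
  unfold potential
  have := mul_le_mul_of_nonneg_left h2 hμ
  nlinarith

/-- A box that maximises the potential is lower regular on every pair of positive excess:
a sparse pair of large subsets could be split off, and one of the four
resulting boxes would have larger potential. -/
theorem regular_of_maximal {c : ℝ} (hθ : 0 < θ) (hc : 0 < c) (hμ : μ = θ * c ^ 2 / 8)
    (r : V → V → β → β → Prop) (S : Finset (V × V)) (hS : ∀ p ∈ S, p.1 ≠ p.2)
    (P : V → Finset β) (hP : ∀ x, (P x).Nonempty)
    (hmax : ∀ Q : V → Finset β, (∀ x, (Q x).Nonempty) →
      potential θ μ r S Q ≤ potential θ μ r S P)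
    {x y : V} (hxy : (x, y) ∈ S) (hpos : 0 < excess θ (r x y) (P x) (P y))
    {A B : Finset β} (hA : A ⊆ P x) (hB : B ⊆ P y)
    (hAc : c * (P x).card ≤ A.card) (hBc : c * (P y).card ≤ B.card) :
    θ / 2 * (A.card * B.card) ≤ ((A ×ˢ B).filter fun p => r x y p.1 p.2).card := by
  by_contra! hlt
  have hμ0 : 0 < μ := by rw [hμ]; positivity
  have hne : x ≠ y := hS _ hxy
  have hX : (0 : ℝ) < (P x).card := by exact_mod_cast (hP x).card_pos
  have hY : (0 : ℝ) < (P y).card := by exact_mod_cast (hP y).card_pos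
  set box : Finset β → Finset β → V → Finset β :=
    fun C D => Function.update (Function.update P x C) y D with hbox
  have hboxx : ∀ C D, box C D x = C := fun C D => by simp [hbox, hne]
  have hboxy : ∀ C D, box C D y = D := fun C D => by simp [hbox]
  set S' := S.erase (x, y)
  have hS' : ∀ p ∈ S', p.1 ≠ p.2 := fun p hp => hS p (Finset.mem_of_mem_erase hp)
  -- the potential without the pair `(x, y)`, averaged over the four boxes
  have s1 := potential_split (θ := θ) hμ0.le r S' hS' P x (hP x) hA
  have s2 : ∀ C, ((P y).card : ℝ) * potential θ μ r S' (Function.update P x C) ≤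
      B.card * potential θ μ r S' (box C B) +
      (P y \ B).card * potential θ μ r S' (box C (P y \ B)) +
      (P y).card * (μ * Real.log 2) := by
    intro C
    have hy : Function.update P x C y = P y := Function.update_of_ne hne.symm _ _
    have := potential_split (θ := θ) hμ0.le r S' hS' (Function.update P x C) y
      (by rw [hy]; exact hP y) (A := B) (by rw [hy]; exact hB)
    rwa [hy] at this
  have hpot : ∀ Q, potential θ μ r S Q =
      excessDensity θ (r x y) (Q x) (Q y) + potential θ μ r S' Q := by
    intro Q
    unfold potential
    rw [← Finset.add_sum_erase _ _ hxy]
    ring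
  have hle : ∀ C D : Finset β, (C.card : ℝ) * D.card * potential θ μ r S (box C D) ≤
      (C.card : ℝ) * D.card * potential θ μ r S P := by
    intro C D
    rcases C.eq_empty_or_nonempty with rfl | hC
    · simp
    rcases D.eq_empty_or_nonempty with rfl | hD
    · simp
    refine mul_le_mul_of_nonneg_left (hmax _ fun z => ?_) (by positivity)
    by_cases hzy : z = y
    · subst hzy; rwa [hboxy]
    by_cases hzx : z = x
    · subst hzx; rwa [hboxx]
    simp only [hbox, Function.update_of_ne hzy, Function.update_of_ne hzx]
    exact hP z
  have hcA : (A.card : ℝ) + (P x \ A).card = (P x).card := by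
    have := Finset.card_sdiff_add_card_eq_card hA
    exact_mod_cast (by omega : A.card + (P x \ A).card = (P x).card)
  have hcB : (B.card : ℝ) + (P y \ B).card = (P y).card := by
    have := Finset.card_sdiff_add_card_eq_card hB
    exact_mod_cast (by omega : B.card + (P y \ B).card = (P y).card)
  have hD : ∀ C D : Finset β, (C.card : ℝ) * D.card * potential θ μ r S (box C D) =
      max 0 (excess θ (r x y) C D) + (C.card : ℝ) * D.card * potential θ μ r S' (box C D) := by
    intro C D
    rw [hpot, hboxx, hboxy, mul_add, card_mul_card_mul_excessDensity]
  have hP0 : ((P x).card : ℝ) * (P y).card * potential θ μ r S P =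
      excess θ (r x y) (P x) (P y) +
        ((P x).card : ℝ) * (P y).card * potential θ μ r S' P := by
    rw [hpot, mul_add, card_mul_card_mul_excessDensity, max_eq_right hpos.le]
  have hAB : excess θ (r x y) A B < -(θ / 2 * (A.card * B.card)) := by
    rw [excess_eq]; linarith
  have hg : excess θ (r x y) (P x) (P y) = excess θ (r x y) A B +
      excess θ (r x y) A (P y \ B) + excess θ (r x y) (P x \ A) B +
      excess θ (r x y) (P x \ A) (P y \ B) := by
    rw [excess_split_left _ hA, excess_split_right _ A hB, excess_split_right _ (P x \ A) hB]
    ring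
  have m0 := le_max_left 0 (excess θ (r x y) A B)
  have m1 := le_max_right 0 (excess θ (r x y) A (P y \ B))
  have m2 := le_max_right 0 (excess θ (r x y) (P x \ A) B)
  have m3 := le_max_right 0 (excess θ (r x y) (P x \ A) (P y \ B))
  have l0 := hle A B
  have l1 := hle A (P y \ B)
  have l2 := hle (P x \ A) B
  have l3 := hle (P x \ A) (P y \ B)
  rw [hD] at l0 l1 l2 l3
  have t1 := mul_le_mul_of_nonneg_left s1 hY.le
  have t2 := mul_le_mul_of_nonneg_left (s2 A) (Nat.cast_nonneg (α := ℝ) A.card)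
  have t3 := mul_le_mul_of_nonneg_left (s2 (P x \ A)) (Nat.cast_nonneg (α := ℝ) (P x \ A).card)
  have hABc : c ^ 2 * ((P x).card * (P y).card) ≤ (A.card : ℝ) * B.card := by
    calc c ^ 2 * ((P x).card * (P y).card) = (c * (P x).card) * (c * (P y).card) := by ring
      _ ≤ _ := by gcongr
  have hlog : Real.log 2 < 1 := by
    have := Real.log_two_lt_d9
    linarith
  have hXY : (0 : ℝ) < (P x).card * (P y).card := by positivity
  have hfin : θ / 2 * (A.card * B.card) < 2 * (μ * Real.log 2) * ((P x).card * (P y).card) := by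
    generalize potential θ μ r S' (Function.update P x A) = p1 at *
    generalize potential θ μ r S' (Function.update P x (P x \ A)) = p2 at *
    generalize potential θ μ r S' (box A B) = q1 at *
    generalize potential θ μ r S' (box A (P y \ B)) = q2 at *
    generalize potential θ μ r S' (box (P x \ A) B) = q3 at *
    generalize potential θ μ r S' (box (P x \ A) (P y \ B)) = q4 at *
    generalize potential θ μ r S' P = p at *
    generalize potential θ μ r S P = M at *
    generalize μ * Real.log 2 = κ at *
    generalize ((P x \ A).card : ℝ) = a' at *
    generalize ((P y \ B).card : ℝ) = b' at *
    generalize ((P x).card : ℝ) = X at *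
    generalize ((P y).card : ℝ) = Y at *
    subst hcA hcB
    linarith
  have : θ / 2 * (c ^ 2 * ((P x).card * (P y).card)) ≤ θ / 2 * (A.card * B.card) := by gcongr
  have : μ * Real.log 2 * ((P x).card * (P y).card) < μ * 1 * ((P x).card * (P y).card) := by
    gcongr
  rw [hμ] at *
  nlinarith [mul_pos (mul_pos hθ (pow_pos hc 2)) hXY]

/-- Every family of bipartite graphs contains a box of linear size which is lower regular on all
pairs of density above `θ` and has at least the original total excess density. The constant `κ`
does not depend on the size of the blocks. -/
theorem exists_regular_box (V : Type*) [Fintype V] {θ c : ℝ} (hθ : 0 < θ) (hc : 0 < c) :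
    ∃ κ : ℝ, 0 < κ ∧ ∀ (β : Type) [Fintype β] [Nonempty β] (r : V → V → β → β → Prop)
      (S : Finset (V × V)), (∀ p ∈ S, p.1 ≠ p.2) →
      ∃ P : V → Finset β, (∀ x, (P x).Nonempty) ∧
        (∀ x, κ * Fintype.card β ≤ (P x).card) ∧
        ∑ p ∈ S, excessDensity θ (r p.1 p.2) Finset.univ Finset.univ ≤
          ∑ p ∈ S, excessDensity θ (r p.1 p.2) (P p.1) (P p.2) ∧
        ∀ x y, (x, y) ∈ S → 0 < excess θ (r x y) (P x) (P y) →
          ∀ A B : Finset β, A ⊆ P x → B ⊆ P y →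
            c * (P x).card ≤ A.card → c * (P y).card ≤ B.card →
            θ / 2 * (A.card * B.card) ≤ ((A ×ˢ B).filter fun p => r x y p.1 p.2).card := by
  set μ : ℝ := θ * c ^ 2 / 8 with hμ
  have hμ0 : 0 < μ := by rw [hμ]; positivity
  set K : ℝ := (Fintype.card (V × V) : ℝ) / μ
  refine ⟨Real.exp (-K), Real.exp_pos _, fun β _ _ r S hS => ?_⟩
  obtain ⟨P, hPmem, hPmax⟩ := Finset.exists_max_image
    (Finset.univ.filter fun Q : V → Finset β => ∀ x, (Q x).Nonempty)
    (potential θ μ r S) ⟨fun _ => Finset.univ, by simp [Finset.univ_nonempty]⟩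
  have hP : ∀ x, (P x).Nonempty := by simpa using hPmem
  have hmax : ∀ Q : V → Finset β, (∀ x, (Q x).Nonempty) →
      potential θ μ r S Q ≤ potential θ μ r S P := fun Q hQ => hPmax Q (by simpa using hQ)
  have hn : (0 : ℝ) < Fintype.card β := by exact_mod_cast Fintype.card_pos
  have hfull := hmax (fun _ => Finset.univ) fun _ => Finset.univ_nonempty
  unfold potential at hfull
  have hlogle : ∀ x, Real.log (P x).card ≤ Real.log (Fintype.card β) := fun x =>
    Real.log_le_log (by exact_mod_cast (hP x).card_pos) (by exact_mod_cast Finset.card_le_univ _)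
  have hD0 : 0 ≤ ∑ p ∈ S, excessDensity θ (r p.1 p.2) (Finset.univ : Finset β) Finset.univ :=
    Finset.sum_nonneg fun p _ => excessDensity_nonneg _ _ _
  have hD1 : ∑ p ∈ S, excessDensity θ (r p.1 p.2) (P p.1) (P p.2) ≤
      (Fintype.card (V × V) : ℝ) := by
    refine (Finset.sum_le_card_nsmul _ _ 1 fun p _ => excessDensity_le_one hθ.le _ _ _).trans ?_
    rw [nsmul_eq_mul, mul_one]
    exact_mod_cast Finset.card_le_univ _
  refine ⟨P, hP, fun x => ?_, ?_, fun x y hxy hpos A B hA hB hAc hBc =>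
    regular_of_maximal hθ hc hμ r S hS P hP hmax hxy hpos hA hB hAc hBc⟩
  · have hx : ∑ y, Real.log (P y).card ≤
        ∑ _y : V, Real.log (Fintype.card β) - (Real.log (Fintype.card β) - Real.log (P x).card) := by
      rw [← Finset.add_sum_erase _ _ (Finset.mem_univ x),
        ← Finset.add_sum_erase _ (fun _ => Real.log (Fintype.card β)) (Finset.mem_univ x)]
      have : ∑ y ∈ Finset.univ.erase x, Real.log (P y).card ≤
          ∑ _y ∈ Finset.univ.erase x, Real.log (Fintype.card β) :=
        Finset.sum_le_sum fun y _ => hlogle y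
      linarith
    have hx' := mul_le_mul_of_nonneg_left hx hμ0.le
    simp only [Finset.card_univ] at hfull
    have h1 : μ * (Real.log (Fintype.card β) - Real.log (P x).card) ≤ Fintype.card (V × V) := by
      linarith
    have h2 : Real.log (Fintype.card β) - Real.log (P x).card ≤ K := by
      rw [le_div_iff₀ hμ0]; linarith
    have hpx : (0 : ℝ) < (P x).card := by exact_mod_cast (hP x).card_pos
    rw [← Real.log_le_log_iff (by positivity) hpx,
      Real.log_mul (Real.exp_pos _).ne' hn.ne', Real.log_exp]
    linarith
  · have hx : ∑ y, Real.log (P y).card ≤ ∑ _y : V, Real.log (Fintype.card β) :=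
      Finset.sum_le_sum fun y _ => hlogle y
    have hx' := mul_le_mul_of_nonneg_left hx hμ0.le
    simp only [Finset.card_univ] at hfull
    linarith

end Box

/-! ### Embedding into a regular box -/

/-- Greedy embedding: if the pairs `(i, j)` of `H` have density at least `θ` between all subsets of
sizes at least `s i` and `s j`, representatives of large sets `Q i` can be chosen so
that all pairs of `H` become related. Each step restricts the remaining sets to the neighbourhood of
the chosen representative, which costs a factor `θ`. -/
theorem exists_representatives {I β : Type*} [Nonempty β] {θ : ℝ} (hθ : 0 < θ) (hθ1 : θ ≤ 1)
    (E : I → I → β → β → Prop) (hE : ∀ i j a b, E i j a b → E j i b a)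
    (H : I → I → Prop) (hH : ∀ i j, H i j → H j i)
    (s : I → ℝ) (hs : ∀ i, 0 < s i) (N : ℕ) (T : Finset I) (hT : T.card ≤ N)
    (Q : I → Finset β)
    (hQ : ∀ i ∈ T, (N : ℝ) * s i ≤ θ ^ T.card * (Q i).card)
    (hreg : ∀ i ∈ T, ∀ j ∈ T, i ≠ j → H i j → ∀ A B : Finset β, A ⊆ Q i → B ⊆ Q j →
      s i ≤ A.card → s j ≤ B.card →
      θ * (A.card * B.card) ≤ ((A ×ˢ B).filter fun p => E i j p.1 p.2).card) :
    ∃ f : I → β, (∀ i ∈ T, f i ∈ Q i) ∧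
      ∀ i ∈ T, ∀ j ∈ T, i ≠ j → H i j → E i j (f i) (f j) := by
  induction T using Finset.induction_on generalizing Q with
  | empty => exact ⟨fun _ => Classical.arbitrary β, by simp, by simp⟩
  | insert i T hi ih =>
    rw [Finset.card_insert_of_notMem hi] at hT hQ
    have hN : (T.card : ℝ) + 1 ≤ N := by exact_mod_cast hT
    have hpow : ∀ n : ℕ, θ ^ n ≤ 1 := fun n => pow_le_one₀ hθ.le hθ1
    have hQN : ∀ j ∈ insert i T, (N : ℝ) * s j ≤ (Q j).card := fun j hj =>
      (hQ j hj).trans (mul_le_of_le_one_left (by positivity) (hpow _))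
    have hQs : ∀ j ∈ insert i T, s j ≤ (Q j).card := fun j hj => by
      refine le_trans ?_ (hQN j hj)
      have : (1 : ℝ) ≤ N := by have : (0 : ℝ) ≤ T.card := by positivity
                               linarith
      nlinarith [hs j]
    have hiT : i ∈ insert i T := Finset.mem_insert_self i T
    -- vertices of `Q i` with few neighbours in `Q j`
    set bad : I → Finset β := fun j => (Q i).filter fun a =>
      (((Q j).filter fun b => E i j a b).card : ℝ) < θ * (Q j).card with hbad
    have hbadlt : ∀ j ∈ T, H i j → ((bad j).card : ℝ) < s i := by
      intro j hj hij
      by_contra! hle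
      have hjT : j ∈ insert i T := Finset.mem_insert_of_mem hj
      have hne : i ≠ j := fun h => hi (h ▸ hj)
      have h1 := hreg i hiT j hjT hne hij (bad j) (Q j) (Finset.filter_subset _ _)
        (Finset.Subset.refl _) hle (hQs j hjT)
      have h2 : ((bad j ×ˢ Q j).filter fun p => E i j p.1 p.2).card =
          ∑ a ∈ bad j, ((Q j).filter fun b => E i j a b).card := by
        rw [Finset.card_filter, Finset.sum_product]
        simp only [Finset.card_filter]
      have hne' : (bad j).Nonempty := by
        rw [← Finset.card_pos]
        have : (0 : ℝ) < (bad j).card := (hs i).trans_le hle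
        exact_mod_cast this
      have h3 : ∑ a ∈ bad j, (((Q j).filter fun b => E i j a b).card : ℝ) <
          ∑ _a ∈ bad j, θ * ((Q j).card : ℝ) :=
        Finset.sum_lt_sum_of_nonempty hne' fun a ha => (Finset.mem_filter.1 ha).2
      rw [h2] at h1
      push_cast at h1
      rw [Finset.sum_const, nsmul_eq_mul] at h3
      linarith
    obtain ⟨a, haQ, ha⟩ : ∃ a ∈ Q i, ∀ j ∈ T, H i j → a ∉ bad j := by
      by_contra! hcon
      have hsub : Q i ⊆ (T.filter fun j => H i j).biUnion bad := by
        intro a ha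
        obtain ⟨j, hj, hij, hab⟩ := hcon a ha
        exact Finset.mem_biUnion.2 ⟨j, Finset.mem_filter.2 ⟨hj, hij⟩, hab⟩
      have h1 : ((Q i).card : ℝ) ≤ ∑ j ∈ T.filter fun j => H i j, ((bad j).card : ℝ) := by
        exact_mod_cast (Finset.card_le_card hsub).trans Finset.card_biUnion_le
      have h2 : ∑ j ∈ T.filter (fun j => H i j), ((bad j).card : ℝ) ≤
          (T.filter fun j => H i j).card • s i :=
        Finset.sum_le_card_nsmul _ _ _ fun j hj =>
          (hbadlt j (Finset.mem_filter.1 hj).1 (Finset.mem_filter.1 hj).2).le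
      have h3 : ((T.filter fun j => H i j).card : ℝ) ≤ T.card := by
        exact_mod_cast Finset.card_filter_le _ _
      rw [nsmul_eq_mul] at h2
      have h4 := hQN i hiT
      nlinarith [hs i]
    set Q' : I → Finset β := fun j =>
      if H i j then (Q j).filter fun b => E i j a b else Q j with hQ'
    have hsub : ∀ j, Q' j ⊆ Q j := by
      intro j
      simp only [hQ']
      split_ifs
      · exact Finset.filter_subset _ _
      · exact Finset.Subset.refl _
    have hcard : ∀ j ∈ T, θ * (Q j).card ≤ (Q' j).card := by
      intro j hj
      simp only [hQ']
      split_ifs with hij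
      · have := ha j hj hij
        simp only [hbad, Finset.mem_filter, not_and, not_lt] at this
        exact this haQ
      · exact mul_le_of_le_one_left (by positivity) hθ1
    obtain ⟨f, hfQ, hf⟩ := ih (by omega) Q'
      (fun j hj => by
        refine (hQ j (Finset.mem_insert_of_mem hj)).trans ?_
        rw [pow_succ, mul_assoc]
        exact mul_le_mul_of_nonneg_left (hcard j hj) (by positivity))
      (fun j hj k hk hjk hHjk A B hA hB => hreg j (Finset.mem_insert_of_mem hj) k
        (Finset.mem_insert_of_mem hk) hjk hHjk A B (hA.trans (hsub j)) (hB.trans (hsub k)))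
    have hadj : ∀ j ∈ T, H i j → E i j a (f j) := by
      intro j hj hij
      have := hfQ j hj
      simp only [hQ', if_pos hij, Finset.mem_filter] at this
      exact this.2
    have hupd : ∀ j ∈ T, Function.update f i a j = f j := fun j hj =>
      Function.update_of_ne (fun h : j = i => hi (h ▸ hj)) _ _
    refine ⟨Function.update f i a, ?_, ?_⟩
    · intro j hj
      rcases Finset.mem_insert.1 hj with rfl | hj
      · simpa using haQ
      · rw [hupd j hj]; exact hsub j (hfQ j hj)
    · intro j hj k hk hjk hHjk
      rcases Finset.mem_insert.1 hj with hji | hj' <;> rcases Finset.mem_insert.1 hk with hki | hk'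
      · exact absurd (hji.trans hki.symm) hjk
      · subst hji
        rw [hupd k hk', Function.update_self]
        exact hadj k hk' hHjk
      · subst hki
        rw [hupd j hj', Function.update_self]
        exact hE _ _ _ _ (hadj j hj' (hH _ _ hHjk))
      · rw [hupd j hj', hupd k hk']
        exact hf j hj' k hk' hjk hHjk

/-- A finite set of `k t` or more linearly ordered elements contains `k` consecutive
intervals of size `t`. -/
theorem exists_consecutive_parts {β : Type*} [LinearOrder β] (P : Finset β) (k t : ℕ)
    (h : k * t ≤ P.card) :
    ∃ Q : Fin k → Finset β, (∀ w, Q w ⊆ P) ∧ (∀ w, (Q w).card = t) ∧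
      ∀ w w', w < w' → ∀ a ∈ Q w, ∀ b ∈ Q w', a < b := by
  set e := P.orderEmbOfFin rfl
  have hlt : ∀ (w : Fin k) (i : Fin t), (w : ℕ) * t + i < P.card := by
    intro w i
    have h1 : ((w : ℕ) + 1) * t ≤ k * t := Nat.mul_le_mul_right _ w.2
    have h2 := i.2
    rw [add_mul, one_mul] at h1
    omega
  refine ⟨fun w => Finset.univ.image fun i : Fin t => e ⟨w * t + i, hlt w i⟩, ?_, ?_, ?_⟩
  · intro w a ha
    obtain ⟨i, -, rfl⟩ := Finset.mem_image.1 ha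
    exact P.orderEmbOfFin_mem rfl _
  · intro w
    rw [Finset.card_image_of_injective, Finset.card_univ, Fintype.card_fin]
    intro i j hij
    have := e.injective hij
    simp only [Fin.mk.injEq] at this
    exact Fin.ext (by omega)
  · intro w w' hww a ha b hb
    obtain ⟨i, -, rfl⟩ := Finset.mem_image.1 ha
    obtain ⟨j, -, rfl⟩ := Finset.mem_image.1 hb
    refine e.strictMono ?_
    rw [Fin.mk_lt_mk]
    have h1 : ((w : ℕ) + 1) * t ≤ w' * t := Nat.mul_le_mul_right _ hww
    have h2 := i.2
    rw [add_mul, one_mul] at h1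
    omega

/-- In a box `P` that is lower regular on the pairs of `H`, one can choose increasing `k`-tuples
`f x` in the sets `P x` such that for every pair `(x, y)` of `H` all entries of `f x` are related to
all entries of `f y`. -/
theorem exists_tuples {V β : Type*} [Fintype V] [LinearOrder β] [Nonempty β] {θ c : ℝ} (k : ℕ)
    (hθ : 0 < θ) (hθ1 : θ ≤ 1)
    (hc0 : 0 < c)
    (hc : (Fintype.card V * k : ℕ) * (2 * (k + 1)) * c ≤ θ ^ (Fintype.card V * k))
    (E : V → V → β → β → Prop) (hE : ∀ i j a b, E i j a b → E j i b a)
    (H : V → V → Prop) (hH : ∀ i j, H i j → H j i) (hirr : ∀ i, ¬ H i i)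
    (P : V → Finset β) (hP : ∀ x, k + 1 ≤ (P x).card)
    (hreg : ∀ x y, H x y → ∀ A B : Finset β, A ⊆ P x → B ⊆ P y →
      c * (P x).card ≤ A.card → c * (P y).card ≤ B.card →
      θ * (A.card * B.card) ≤ ((A ×ˢ B).filter fun p => E x y p.1 p.2).card) :
    ∃ f : V → Fin k → β, (∀ x, StrictMono (f x)) ∧ (∀ x w, f x w ∈ P x) ∧
      ∀ x y, H x y → ∀ w w', E x y (f x w) (f y w') := by
  have hpart : ∀ x, ∃ Q : Fin k → Finset β, (∀ w, Q w ⊆ P x) ∧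
      (∀ w, (Q w).card = (P x).card / (k + 1)) ∧
      ∀ w w', w < w' → ∀ a ∈ Q w, ∀ b ∈ Q w', a < b := fun x =>
    exists_consecutive_parts _ _ _
      ((Nat.mul_le_mul_right _ (Nat.le_succ k)).trans (Nat.mul_div_le _ _))
  choose Q hQP hQc hQlt using hpart
  have hhalf : ∀ x, ((P x).card : ℝ) ≤ 2 * (k + 1) * ((P x).card / (k + 1) : ℕ) := by
    intro x
    have h1 : 1 ≤ (P x).card / (k + 1) := (Nat.one_le_div_iff (by omega)).2 (hP x)
    have h2 := Nat.lt_div_mul_add (a := (P x).card) (b := k + 1) (by omega)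
    have : (P x).card ≤ 2 * (k + 1) * ((P x).card / (k + 1)) := by nlinarith
    exact_mod_cast this
  have hpos : ∀ x, (0 : ℝ) < (P x).card := fun x => by
    have := hP x
    exact_mod_cast (by omega : 0 < (P x).card)
  have hcardI : (Finset.univ : Finset (V × Fin k)).card = Fintype.card V * k := by simp
  obtain ⟨f, hfQ, hf⟩ := exists_representatives hθ hθ1 (I := V × Fin k)
    (fun i j => E i.1 j.1) (fun i j => hE i.1 j.1) (fun i j => H i.1 j.1) (fun i j => hH i.1 j.1)
    (fun i => c * (P i.1).card) (fun i => mul_pos hc0 (hpos _)) (Fintype.card V * k) Finset.univ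
    hcardI.le (fun i => Q i.1 i.2)
    (fun i _ => by
      rw [hcardI, hQc]
      calc ((Fintype.card V * k : ℕ) : ℝ) * (c * (P i.1).card)
          ≤ (Fintype.card V * k : ℕ) * (c * (2 * (k + 1) * ((P i.1).card / (k + 1) : ℕ))) := by
            gcongr; exact hhalf _
        _ = (Fintype.card V * k : ℕ) * (2 * (k + 1)) * c * ((P i.1).card / (k + 1) : ℕ) := by ring
        _ ≤ _ := by gcongr)
    (fun i _ j _ _ hij A B hA hB hAc hBc =>
      hreg i.1 j.1 hij A B (hA.trans (hQP _ _)) (hB.trans (hQP _ _)) hAc hBc)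
  refine ⟨fun x w => f (x, w), fun x w w' hww => ?_, fun x w => ?_, fun x y hxy w w' => ?_⟩
  · exact hQlt x w w' hww _ (hfQ (x, w) (Finset.mem_univ _)) _ (hfQ (x, w') (Finset.mem_univ _))
  · exact hQP x w (hfQ (x, w) (Finset.mem_univ _))
  · refine hf (x, w) (Finset.mem_univ _) (y, w') (Finset.mem_univ _) (fun h => ?_) hxy
    have : x = y := congrArg Prod.fst h
    subst this
    exact hirr _ hxy

/-! ### Ordered copies with isolated vertices -/

/-- An ordered copy `φ` of `F` in a graph `G` with an edge can be turned into a
monotone map that agrees with `φ` on the non-isolated vertices of `F` and only takes non-isolated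
vertices of `G` as values. -/
theorem exists_monotone_nonisolated {α γ : Type*} [Fintype α] [LinearOrder α] [LinearOrder γ]
    (F : SimpleGraph α) (G : SimpleGraph γ) (φ : α → γ) (hφ : StrictMono φ)
    (hFG : ∀ u v, F.Adj u v → G.Adj (φ u) (φ v)) (hG : ∃ x y, G.Adj x y) :
    ∃ q : α → γ, Monotone q ∧ (∀ u v, F.Adj u v → q u = φ u) ∧ ∀ w, ∃ y, G.Adj (q w) y := by
  set N : Finset α := Finset.univ.filter fun u => ∃ v, F.Adj u v with hN
  rcases N.eq_empty_or_nonempty with h0 | hne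
  · obtain ⟨x, y, hxy⟩ := hG
    refine ⟨fun _ => x, monotone_const, fun u v huv => ?_, fun _ => ⟨y, hxy⟩⟩
    have : u ∈ N := by simp only [hN, Finset.mem_filter, Finset.mem_univ, true_and]; exact ⟨v, huv⟩
    simp [h0] at this
  set p : α → α := fun w =>
    if h : (N.filter (· ≤ w)).Nonempty then (N.filter (· ≤ w)).max' h else N.min' hne with hp
  have hpN : ∀ w, p w ∈ N := by
    intro w
    simp only [hp]
    split_ifs with h
    · exact (Finset.mem_filter.1 (Finset.max'_mem _ h)).1
    · exact Finset.min'_mem _ _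
  have hpmono : Monotone p := by
    intro w w' hw
    by_cases h : (N.filter (· ≤ w)).Nonempty
    · have hsub : N.filter (· ≤ w) ⊆ N.filter (· ≤ w') := fun u hu => by
        rw [Finset.mem_filter] at hu ⊢
        exact ⟨hu.1, hu.2.trans hw⟩
      simp only [hp, dif_pos h, dif_pos (h.mono hsub)]
      exact Finset.max'_subset h hsub
    · have : p w = N.min' hne := by simp only [hp, dif_neg h]
      rw [this]
      exact Finset.min'_le _ _ (hpN w')
  have hpid : ∀ u ∈ N, p u = u := by
    intro u hu
    have hmem : u ∈ N.filter (· ≤ u) := Finset.mem_filter.2 ⟨hu, le_rfl⟩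
    have hpu : p u = (N.filter (· ≤ u)).max' ⟨u, hmem⟩ := dif_pos _
    rw [hpu]
    exact le_antisymm (Finset.mem_filter.1 (Finset.max'_mem _ ⟨u, hmem⟩)).2
      (Finset.le_max' _ _ hmem)
  refine ⟨φ ∘ p, hφ.monotone.comp hpmono, fun u v huv => ?_, fun w => ?_⟩
  · have : u ∈ N := by simp only [hN, Finset.mem_filter, Finset.mem_univ, true_and]; exact ⟨v, huv⟩
    simp [hpid u this]
  · obtain ⟨v, hv⟩ := (Finset.mem_filter.1 (hpN w)).2
    exact ⟨φ v, hFG _ _ hv⟩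

/-- A copy of `F` in a graph `G` on the cube lifts to a subgraph `G'` of a block graph if every block
contains an increasing tuple indexed by the vertices of `F` and all edges of `G` are complete
between the tuples. A whole tuple per block is needed because the vertex set of `G'` may be a
proper subset: isolated vertices of `F` are put in the blocks of non-isolated ones. -/
theorem containsOrderedCopy_of_tuples {α : Type*} [Fintype α] [LinearOrder α] (F : SimpleGraph α)
    {d m : ℕ} {R : SimpleGraph (BlockVert d m)} (G' : R.Subgraph) (G : SimpleGraph (Cube d))
    (f : Cube d → α → Fin m) (hf : ∀ x, StrictMono (f x))
    (hadj : ∀ x y, G.Adj x y → ∀ w w',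
      G'.Adj (toLex (x, f x w)) (toLex (y, f y w')))
    (hG : ∃ x y, G.Adj x y) (h : ContainsOrderedCopy F G) :
    ContainsOrderedCopy F G'.coe := by
  obtain ⟨φ, hφ, hFG⟩ := h
  obtain ⟨q, hq, hqφ, hqG⟩ := exists_monotone_nonisolated F G φ hφ hFG hG
  refine ⟨fun w => ⟨toLex (q w, f (q w) w), ?_⟩, ?_, ?_⟩
  · obtain ⟨y, hy⟩ := hqG w
    exact (hadj _ _ hy w w).fst_mem
  · intro w w' hw
    rw [← Subtype.coe_lt_coe, Prod.Lex.toLex_lt_toLex]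
    rcases (hq hw.le).lt_or_eq with h | h
    · exact Or.inl h
    · refine Or.inr ⟨h, ?_⟩
      change f (q w) w < f (q w') w'
      rw [← h]
      exact hf _ hw
  · intro u v huv
    rw [SimpleGraph.Subgraph.coe_adj]
    refine hadj _ _ ?_ _ _
    rw [hqφ u v huv, hqφ v u huv.symm]
    exact hFG _ _ huv

/-! ### Counting edges -/

theorem edgeCount_eq_card {γ : Type*} [Fintype γ] [LinearOrder γ] (K : SimpleGraph γ) :
    edgeCount K = (Finset.univ.filter fun p : γ × γ => p.1 < p.2 ∧ K.Adj p.1 p.2).card := by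
  rw [edgeCount, ← Set.ncard_coe_finset]
  symm
  refine Set.ncard_congr (fun p _ => s(p.1, p.2)) ?_ ?_ ?_
  · intro p hp
    simp only [Finset.coe_filter, Finset.mem_univ, true_and, Set.mem_ofPred_eq] at hp
    exact hp.2
  · rintro ⟨a, b⟩ ⟨a', b'⟩ hp hp' h
    simp only [Finset.coe_filter, Finset.mem_univ, true_and, Set.mem_ofPred_eq] at hp hp'
    rcases Sym2.eq_iff.1 h with ⟨h1, h2⟩ | ⟨h1, h2⟩
    · exact Prod.ext h1 h2
    · simp only at h1 h2
      subst h1 h2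
      exact absurd hp.1 hp'.1.asymm
  · intro e he
    induction e with | _ a b =>
    have hab : K.Adj a b := he
    rcases hab.ne.lt_or_gt with h | h
    · exact ⟨(a, b), by simp [h, hab], rfl⟩
    · exact ⟨(b, a), by simp [h, hab.symm], Sym2.eq_swap⟩

theorem edgeCount_coe {γ : Type*} {R : SimpleGraph γ} (G' : R.Subgraph) :
    edgeCount G'.coe = edgeCount G'.spanningCoe := by
  rw [edgeCount, edgeCount, SimpleGraph.Subgraph.edgeSet_spanningCoe,
    ← SimpleGraph.Subgraph.image_coe_edgeSet_coe]
  exact (Set.ncard_image_of_injective _ (Sym2.map.injective Subtype.val_injective)).symm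

theorem atLevel_unique {d ℓ ℓ' : ℕ} {x y : Cube d} (h : atLevel ℓ x y) (h' : atLevel ℓ' x y) :
    ℓ = ℓ' := by
  obtain ⟨i, rfl, hi, hlt⟩ := h
  obtain ⟨j, rfl, hj, hlt'⟩ := h'
  have : i = j := le_antisymm (not_lt.1 fun h => hj (hlt _ h)) (not_lt.1 fun h => hi (hlt' _ h))
  rw [this]

theorem exists_atLevel {d : ℕ} {x y : Cube d} (h : x ≠ y) :
    ∃ ℓ ∈ Finset.Icc 1 d, atLevel ℓ x y := by
  have hne : (Finset.univ.filter fun i : Fin d => ofLex x i ≠ ofLex y i).Nonempty := by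
    by_contra hcon
    refine h (ofLex.injective (funext fun i => ?_))
    by_contra hi
    exact hcon ⟨i, Finset.mem_filter.2 ⟨Finset.mem_univ _, hi⟩⟩
  have hmem := (Finset.mem_filter.1 (Finset.min'_mem _ hne)).2
  refine ⟨_, Finset.mem_Icc.2 ⟨Nat.le_add_left 1 _, (Finset.min' _ hne).2⟩, _, rfl, hmem, ?_⟩
  intro j hj
  by_contra hcon
  exact absurd (Finset.min'_le _ j (Finset.mem_filter.2 ⟨Finset.mem_univ _, hcon⟩)) (not_le.2 hj)

theorem sum_levelCountB_le {d m : ℕ} (R : SimpleGraph (BlockVert d m)) :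
    ∑ ℓ ∈ Finset.Icc 1 d, levelCountB R ℓ ≤ edgeCount R := by
  have h : ∀ ℓ, levelCountB R ℓ = (Finset.univ.filter fun p : BlockVert d m × BlockVert d m =>
      p.1 < p.2 ∧ R.Adj p.1 p.2 ∧ atLevel ℓ (ofLex p.1).1 (ofLex p.2).1).card := by
    intro ℓ
    rw [levelCountB, ← Set.ncard_coe_finset]
    congr 1
    ext p
    simp
  simp only [h]
  rw [edgeCount_eq_card, ← Finset.card_biUnion]
  · refine Finset.card_le_card fun p hp => ?_
    obtain ⟨ℓ, -, hp⟩ := Finset.mem_biUnion.1 hp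
    simp only [Finset.mem_filter, Finset.mem_univ, true_and] at hp ⊢
    exact ⟨hp.1, hp.2.1⟩
  · intro ℓ _ ℓ' _ hne
    refine Finset.disjoint_left.2 fun p hp hp' => hne ?_
    simp only [Finset.mem_filter, Finset.mem_univ, true_and] at hp hp'
    exact atLevel_unique hp.2.2 hp'.2.2

/-- The relation on `[m]` induced by a block graph between two blocks. -/
def blockRel {d m : ℕ} (K : SimpleGraph (BlockVert d m)) (x y : Cube d) (i j : Fin m) : Prop :=
  K.Adj (toLex (x, i)) (toLex (y, j))

/-- All edges are counted by the pairs of distinct blocks, up to at most `m²` edges in each of the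
`2^d` blocks. -/
theorem edgeCount_le {d m : ℕ} (K : SimpleGraph (BlockVert d m)) :
    edgeCount K ≤ ∑ p ∈ Finset.univ.filter (fun p : Cube d × Cube d => p.1 < p.2),
      (((Finset.univ : Finset (Fin m)) ×ˢ (Finset.univ : Finset (Fin m))).filter
        fun q => blockRel K p.1 p.2 q.1 q.2).card + 2 ^ d * m ^ 2 := by
  rw [edgeCount_eq_card]
  set T := Finset.univ.filter fun p : BlockVert d m × BlockVert d m => p.1 < p.2 ∧ K.Adj p.1 p.2
    with hT
  set T₁ := T.filter fun p => (ofLex p.1).1 < (ofLex p.2).1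
  set T₂ := T.filter fun p => ¬ (ofLex p.1).1 < (ofLex p.2).1
  have h0 : T.card = T₁.card + T₂.card := (Finset.card_filter_add_card_filter_not _).symm
  have h1 : T₁.card ≤ ∑ p ∈ Finset.univ.filter (fun p : Cube d × Cube d => p.1 < p.2),
      (((Finset.univ : Finset (Fin m)) ×ˢ (Finset.univ : Finset (Fin m))).filter
        fun q => blockRel K p.1 p.2 q.1 q.2).card := by
    rw [Finset.card_eq_sum_card_fiberwise (f := fun p => ((ofLex p.1).1, (ofLex p.2).1))
      (t := Finset.univ.filter (fun p : Cube d × Cube d => p.1 < p.2))]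
    · refine Finset.sum_le_sum fun p hp => ?_
      refine Finset.card_le_card_of_injOn (fun q => ((ofLex q.1).2, (ofLex q.2).2)) ?_ ?_
      · rintro ⟨a, b⟩ hq
        simp only [T₁, hT, Finset.coe_filter, Finset.mem_filter, Finset.mem_univ, true_and,
          Set.mem_ofPred_eq] at hq
        obtain ⟨⟨⟨-, hab⟩, -⟩, rfl⟩ := hq
        exact Finset.mem_coe.2 (Finset.mem_filter.2 ⟨by simp, hab⟩)
      · rintro ⟨a, b⟩ hq ⟨a', b'⟩ hq' h
        simp only [Finset.coe_filter, Set.mem_ofPred_eq] at hq hq'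
        have e := hq.2.trans hq'.2.symm
        simp only [Prod.mk.injEq] at e h
        exact Prod.ext (ofLex.injective (Prod.ext e.1 h.1)) (ofLex.injective (Prod.ext e.2 h.2))
    · intro p hp
      have := (Finset.mem_filter.1 (Finset.mem_coe.1 hp)).2
      simpa using this
  have h2 : T₂.card ≤ 2 ^ d * m ^ 2 := by
    have hc : (Finset.univ : Finset (Cube d × (Fin m × Fin m))).card = 2 ^ d * m ^ 2 := by
      have : Fintype.card (Cube d) = 2 ^ d := by
        change Fintype.card (Fin d → Bool) = 2 ^ d
        simp
      simp [this, sq]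
    rw [← hc]
    refine Finset.card_le_card_of_injOn
      (fun q => ((ofLex q.1).1, ((ofLex q.1).2, (ofLex q.2).2))) (by simp [Set.MapsTo]) ?_
    have heq : ∀ q ∈ T₂, (ofLex q.1).1 = (ofLex q.2).1 := by
      intro q hq
      simp only [T₂, hT, Finset.mem_filter, Finset.mem_univ, true_and] at hq
      rcases Prod.Lex.lt_iff.1 hq.1.1 with h | h
      · exact absurd h hq.2
      · exact h.1
    rintro ⟨a, b⟩ hq ⟨a', b'⟩ hq' h
    have e := heq _ hq
    have e' := heq _ hq'
    simp only [Prod.mk.injEq] at h e e'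
    refine Prod.ext (ofLex.injective (Prod.ext h.1 h.2.1)) (ofLex.injective (Prod.ext ?_ h.2.2))
    exact e.symm.trans (h.1.trans e')
  omega

/-- A weight `C · 2^(ℓ-d)` on the level-`ℓ` edges of `G` adds up to `C · 2^(d-1)` times the
normalised level sum, because `2^(ℓ-d) τ_{ℓ,d} = 2^(d-1)`. -/
theorem sum_le_sum_levelCount {d : ℕ} (hd : 1 ≤ d) (G : SimpleGraph (Cube d)) {C : ℝ} (hC : 0 ≤ C)
    (g : Cube d × Cube d → ℝ)
    (hg : ∀ p : Cube d × Cube d, p.1 < p.2 → G.Adj p.1 p.2 → ∀ ℓ, atLevel ℓ p.1 p.2 →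
      g p ≤ C * 2 ^ ((ℓ : ℤ) - (d : ℤ))) :
    ∑ p ∈ Finset.univ.filter (fun p : Cube d × Cube d => p.1 < p.2 ∧ G.Adj p.1 p.2), g p ≤
      C * 2 ^ (d - 1) * ∑ ℓ ∈ Finset.Icc 1 d, (levelCount G ℓ : ℝ) / (tau d ℓ : ℝ) := by
  have h1 : ∀ p ∈ Finset.univ.filter (fun p : Cube d × Cube d => p.1 < p.2 ∧ G.Adj p.1 p.2),
      g p ≤ ∑ ℓ ∈ Finset.Icc 1 d,
        if atLevel ℓ p.1 p.2 then C * (2 : ℝ) ^ ((ℓ : ℤ) - (d : ℤ)) else 0 := by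
    intro p hp
    simp only [Finset.mem_filter, Finset.mem_univ, true_and] at hp
    obtain ⟨ℓ, hℓ, hlev⟩ := exists_atLevel hp.1.ne
    refine (hg p hp.1 hp.2 ℓ hlev).trans ?_
    have := Finset.single_le_sum (f := fun ℓ : ℕ =>
      if atLevel ℓ p.1 p.2 then C * (2 : ℝ) ^ ((ℓ : ℤ) - (d : ℤ)) else 0)
      (fun i _ => by split_ifs <;> positivity) hℓ
    simpa [hlev] using this
  refine (Finset.sum_le_sum h1).trans (le_of_eq ?_)
  rw [Finset.sum_comm, Finset.mul_sum]
  refine Finset.sum_congr rfl fun ℓ hℓ => ?_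
  rw [← Finset.sum_filter, Finset.sum_const, Finset.filter_filter, nsmul_eq_mul]
  have hcard : (Finset.univ.filter fun p : Cube d × Cube d =>
      (p.1 < p.2 ∧ G.Adj p.1 p.2) ∧ atLevel ℓ p.1 p.2).card = levelCount G ℓ := by
    rw [levelCount, ← Set.ncard_coe_finset]
    congr 1
    ext p
    simp [and_assoc]
  rw [hcard]
  have hpow : (2 : ℝ) ^ ((ℓ : ℤ) - (d : ℤ)) * (tau d ℓ : ℝ) = 2 ^ (d - 1) := by
    have hℓ' := Finset.mem_Icc.1 hℓ
    rw [tau]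
    push_cast
    rw [← zpow_natCast, ← zpow_natCast, ← zpow_add₀ two_ne_zero]
    congr 1
    omega
  have htau : (tau d ℓ : ℝ) ≠ 0 := by unfold tau; positivity
  rw [← hpow]
  field_simp

/-! ### The reduction -/

/-- The graph on the cube whose edges are the pairs of blocks with positive excess in `P`. -/
noncomputable def reducedGraph {d m : ℕ} (θ : ℝ) (K : SimpleGraph (BlockVert d m))
    (P : Cube d → Finset (Fin m)) : SimpleGraph (Cube d) :=
  SimpleGraph.fromRel fun x y => x < y ∧ 0 < excess θ (blockRel K x y) (P x) (P y)

theorem reducedGraph_adj_of_lt {d m : ℕ} {θ : ℝ} {K : SimpleGraph (BlockVert d m)}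
    {P : Cube d → Finset (Fin m)} {x y : Cube d} (h : x < y) :
    (reducedGraph θ K P).Adj x y ↔ 0 < excess θ (blockRel K x y) (P x) (P y) := by
  rw [reducedGraph, SimpleGraph.fromRel_adj]
  constructor
  · rintro ⟨-, h' | h'⟩
    · exact h'.2
    · exact absurd h h'.1.asymm
  · exact fun h' => ⟨h.ne, Or.inl ⟨h, h'⟩⟩

/-- If `K ≤ R` has at least `b · e(R)` edges and the box `P` keeps the total excess density of `K`,
then the normalised level sum of the reduced graph is about `b`. The error `3` collects the edges
inside blocks and the threshold `θ` summed over all pairs of blocks. -/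
theorem levelSum_reducedGraph {d m : ℕ} (hd : 1 ≤ d) (hm : 1 ≤ m) {R K : SimpleGraph (BlockVert d m)}
    (hKR : K ≤ R) {δ b θ : ℝ} (hδ : 0 ≤ δ) (hb : 0 ≤ b) (hθ : θ = (1 / 2) ^ (d + 1))
    (hI : PropI R δ) (hII : PropII R δ) (hKb : b * edgeCount R ≤ edgeCount K)
    (P : Cube d → Finset (Fin m)) (hP : ∀ x, (P x).Nonempty)
    (hPm : ∀ x, (m : ℝ) ^ ((2 : ℝ) / 3) ≤ (P x).card)
    (hsum : ∑ p ∈ Finset.univ.filter (fun p : Cube d × Cube d => p.1 < p.2),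
        excessDensity θ (blockRel K p.1 p.2) Finset.univ Finset.univ ≤
      ∑ p ∈ Finset.univ.filter (fun p : Cube d × Cube d => p.1 < p.2),
        excessDensity θ (blockRel K p.1 p.2) (P p.1) (P p.2)) :
    b * (1 - δ) * d - 3 ≤ (1 + δ) *
      ∑ ℓ ∈ Finset.Icc 1 d, (levelCount (reducedGraph θ K P) ℓ : ℝ) / (tau d ℓ : ℝ) := by
  have hm0 : (0 : ℝ) < m := by exact_mod_cast hm
  have hθ0 : 0 < θ := by rw [hθ]; positivity
  have hpow : (2 : ℝ) ^ d = 2 * 2 ^ (d - 1) := by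
    rw [← pow_succ']; congr 1; omega
  set S := Finset.univ.filter (fun p : Cube d × Cube d => p.1 < p.2)
  set e : Cube d × Cube d → ℕ := fun p =>
    (((Finset.univ : Finset (Fin m)) ×ˢ (Finset.univ : Finset (Fin m))).filter
        fun q => blockRel K p.1 p.2 q.1 q.2).card with he
  -- the edges of `K` between distinct blocks
  have hcount : (edgeCount K : ℝ) ≤ ∑ p ∈ S, (e p : ℝ) + 2 ^ d * m ^ 2 := by
    exact_mod_cast edgeCount_le K
  have hR : (1 - δ) * d * (2 ^ (d - 1) * (m : ℝ) ^ 2) ≤ edgeCount R := by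
    have h1 : ∑ ℓ ∈ Finset.Icc 1 d, ((1 - δ) * 2 ^ (d - 1) * (m : ℝ) ^ 2) ≤
        ∑ ℓ ∈ Finset.Icc 1 d, (levelCountB R ℓ : ℝ) :=
      Finset.sum_le_sum fun ℓ hℓ => (hI ℓ hℓ).1
    have h2 : ∑ ℓ ∈ Finset.Icc 1 d, (levelCountB R ℓ : ℝ) ≤ edgeCount R := by
      exact_mod_cast sum_levelCountB_le R
    rw [Finset.sum_const, Nat.card_Icc, nsmul_eq_mul, Nat.add_sub_cancel] at h1
    linarith
  have hlow : (∑ p ∈ S, (e p : ℝ)) / m ^ 2 - 2 ^ (d - 1) ≤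
      ∑ p ∈ S, excessDensity θ (blockRel K p.1 p.2) Finset.univ Finset.univ := by
    have h1 : ∀ p ∈ S, (e p : ℝ) / m ^ 2 - θ ≤
        excessDensity θ (blockRel K p.1 p.2) (Finset.univ : Finset (Fin m)) Finset.univ := by
      intro p _
      have h := le_max_right 0
        (excess θ (blockRel K p.1 p.2) (Finset.univ : Finset (Fin m)) Finset.univ)
      rw [← card_mul_card_mul_excessDensity, excess_eq] at h
      simp only [Finset.card_univ, Fintype.card_fin] at h
      rw [sub_le_iff_le_add, div_le_iff₀ (by positivity)]
      simp only [he]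
      nlinarith
    have h2 := Finset.sum_le_sum h1
    rw [Finset.sum_sub_distrib, ← Finset.sum_div, Finset.sum_const, nsmul_eq_mul] at h2
    have h3 : (S.card : ℝ) * θ ≤ 2 ^ (d - 1) := by
      have h4 : S.card ≤ 2 ^ d * 2 ^ d := by
        have hc : Fintype.card (Cube d) = 2 ^ d := by
          change Fintype.card (Fin d → Bool) = 2 ^ d
          simp
        calc S.card ≤ Fintype.card (Cube d × Cube d) := Finset.card_le_univ _
          _ = _ := by rw [Fintype.card_prod, hc]
      have h5 : (S.card : ℝ) ≤ 2 ^ d * 2 ^ d := by exact_mod_cast h4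
      calc (S.card : ℝ) * θ ≤ 2 ^ d * 2 ^ d * θ := by gcongr
        _ = 2 ^ (d - 1) := by
          rw [hθ, one_div, inv_pow, pow_succ, hpow]
          field_simp
    linarith
  -- only edges of the reduced graph contribute to the excess of `P`
  have hup : ∑ p ∈ S, excessDensity θ (blockRel K p.1 p.2) (P p.1) (P p.2) ≤
      (1 + δ) * 2 ^ (d - 1) *
        ∑ ℓ ∈ Finset.Icc 1 d, (levelCount (reducedGraph θ K P) ℓ : ℝ) / (tau d ℓ : ℝ) := by
    have h1 : ∑ p ∈ S, excessDensity θ (blockRel K p.1 p.2) (P p.1) (P p.2) =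
        ∑ p ∈ Finset.univ.filter (fun p : Cube d × Cube d =>
          p.1 < p.2 ∧ (reducedGraph θ K P).Adj p.1 p.2),
          excessDensity θ (blockRel K p.1 p.2) (P p.1) (P p.2) := by
      rw [← Finset.filter_filter]
      refine (Finset.sum_filter_of_ne fun p hp hne => ?_).symm
      rw [reducedGraph_adj_of_lt (Finset.mem_filter.1 hp).2]
      by_contra hcon
      refine hne ?_
      rw [excessDensity, max_eq_left (not_lt.1 hcon), zero_div]
    rw [h1]
    refine sum_le_sum_levelCount hd _ (by positivity) _ fun p hp _ ℓ hℓ => ?_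
    have hX : (0 : ℝ) < (P p.1).card := by exact_mod_cast (hP _).card_pos
    have hY : (0 : ℝ) < (P p.2).card := by exact_mod_cast (hP _).card_pos
    have h2 := hII p.1 p.2 ℓ hℓ (P p.1) (P p.2) (hPm _) (hPm _)
    have h3 : ((P p.1 ×ˢ P p.2).filter fun q => blockRel K p.1 p.2 q.1 q.2).card ≤
        {pq : Fin m × Fin m | pq.1 ∈ P p.1 ∧ pq.2 ∈ P p.2 ∧
          R.Adj (toLex (p.1, pq.1)) (toLex (p.2, pq.2))}.ncard := by
      rw [← Set.ncard_coe_finset]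
      refine Set.ncard_le_ncard (fun q hq => ?_) (Set.toFinite _)
      have hq' := Finset.mem_filter.1 (Finset.mem_coe.1 hq)
      have hq'' := Finset.mem_product.1 hq'.1
      exact ⟨hq''.1, hq''.2, hKR hq'.2⟩
    have h3' : (((P p.1 ×ˢ P p.2).filter fun q => blockRel K p.1 p.2 q.1 q.2).card : ℝ) ≤ _ :=
      (Nat.cast_le.2 h3).trans h2
    rw [excessDensity, div_le_iff₀ (by positivity)]
    refine max_le (by positivity) ?_
    rw [excess_eq]
    have : 0 ≤ θ * ((P p.1).card * (P p.2).card) := by positivity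
    linarith
  have hmain : b * ((1 - δ) * d * (2 ^ (d - 1) * (m : ℝ) ^ 2)) ≤
      ∑ p ∈ S, (e p : ℝ) + 2 ^ d * m ^ 2 :=
    (mul_le_mul_of_nonneg_left hR hb).trans (hKb.trans hcount)
  have hmain' : b * ((1 - δ) * d * 2 ^ (d - 1)) - 2 ^ d ≤ (∑ p ∈ S, (e p : ℝ)) / m ^ 2 := by
    rw [le_div_iff₀ (by positivity)]
    linarith
  have hpos : (0 : ℝ) < 2 ^ (d - 1) := by positivity
  refine le_of_mul_le_mul_right ?_ hpos
  linarith

/-- reduction to `{0,1}^d`. Let `α ∈ [0,1]`, let `F` be an ordered graph,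
and let `R(m,d)` be a family of graphs on `{0,1}^d × [m]` satisfying properties (i) and (ii)
with any accuracy for all sufficiently large `m`. If, for all `ε > 0` and all sufficiently
large `d`, every graph `G` on `{0,1}^d` with `(1/d)·Σ_ℓ e_ℓ(G)/τ_{ℓ,d} ≥ α + ε` contains an
ordered copy of `F`, then `lim_{d→∞} lim_{m→∞} ρ_<(F, R(m,d)) ≤ α`. -/
theorem reduction_to_cube
    (a : ℝ) (ha : a ∈ Set.Icc (0 : ℝ) 1)
    {α : Type*} [Fintype α] [LinearOrder α] (F : SimpleGraph α)
    (R : ∀ d m : ℕ, SimpleGraph (BlockVert d m))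
    (hR : ∀ (d : ℕ) (ε : ℝ), 0 < ε → ∃ m₀ : ℕ, ∀ m ≥ m₀, PropI (R d m) ε ∧ PropII (R d m) ε)
    (hF : ∀ ε : ℝ, 0 < ε → ∃ d₀ : ℕ, ∀ d ≥ d₀, ∀ G : SimpleGraph (Cube d),
      a + ε ≤ (1 / (d : ℝ)) * ∑ ℓ ∈ Finset.Icc 1 d, (levelCount G ℓ : ℝ) / (tau d ℓ : ℝ) →
      ContainsOrderedCopy F G) :
    ∀ ε : ℝ, 0 < ε → ∃ d₁ : ℕ, ∀ d ≥ d₁, ∃ m₁ : ℕ, ∀ m ≥ m₁,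
      relTuranDensityIn F (R d m) ≤ a + ε := by
  intro ε hε
  obtain ⟨d₀, hd₀⟩ := hF (ε / 4) (by positivity)
  -- `d ≥ 12 / ε` makes the edges inside blocks and the discarded sparse pairs cost at most
  -- `ε / 4` of the normalised level sum.
  refine ⟨max d₀ (⌈12 / ε⌉₊ + 1), fun d hd => ?_⟩
  have hd1 : 1 ≤ d := by
    have := (le_max_right _ _).trans hd
    omega
  have hdε : 12 ≤ ε * d := by
    have h1 : ⌈12 / ε⌉₊ ≤ d := by
      have := (le_max_right _ _).trans hd
      omega
    have h2 : 12 / ε ≤ d := (Nat.le_ceil _).trans (by exact_mod_cast h1)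
    rw [div_le_iff₀ hε] at h2
    linarith
  have hdpos : (0 : ℝ) < d := by exact_mod_cast hd1
  -- This accuracy gives `(1 + δ) (a + ε / 4) ≤ (a + ε) (1 - δ) - ε / 4` for `a ≤ 1`.
  set δ : ℝ := ε / (4 + 4 * ε) with hδ
  have hδ0 : 0 < δ := by positivity
  have hδε : δ * (4 + 4 * ε) = ε := by rw [hδ]; field_simp
  obtain ⟨m₀, hm₀⟩ := hR d δ hδ0
  -- Subtracting `θ` from the densities loses a proportion `2 ^ (-ℓ - 1)` of the density
  -- `2 ^ (ℓ - d)` of `R` at level `ℓ`. This is summable in `ℓ`, hence negligible for large `d`.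
  set θ : ℝ := (1 / 2) ^ (d + 1) with hθ
  have hθ0 : 0 < θ := by positivity
  have hθ1 : θ ≤ 1 := pow_le_one₀ (by norm_num) (by norm_num)
  set k := Fintype.card α with hk
  set M := Fintype.card (Cube d) * k with hM
  -- At most `M` vertices are embedded, each shrinking a candidate set by a factor `θ / 2`, and
  -- `c` is the proportion that must survive all of them.
  set c : ℝ := (θ / 2) ^ M / ((M + 1) * (2 * (k + 1))) with hc
  have hc0 : 0 < c := by positivity
  obtain ⟨κ, hκ, hbox⟩ := exists_regular_box (Cube d) hθ0 hc0
  refine ⟨max m₀ (max 1 (max ⌈(k + 1) / κ⌉₊ ⌈1 / κ ^ 3⌉₊)), fun m hm => ?_⟩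
  simp only [ge_iff_le, max_le_iff, Nat.ceil_le] at hm
  obtain ⟨hmm₀, hm1, hmk, hmκ⟩ := hm
  obtain ⟨hI, hII⟩ := hm₀ m hmm₀
  have hm0 : (0 : ℝ) < m := by exact_mod_cast hm1
  rw [div_le_iff₀ hκ] at hmk
  rw [div_le_iff₀ (by positivity)] at hmκ
  have hm23 : (m : ℝ) ^ ((2 : ℝ) / 3) ≤ κ * m := by
    refine le_of_pow_le_pow_left₀ (n := 3) (by norm_num) (by positivity) ?_
    rw [← Real.rpow_natCast, ← Real.rpow_mul hm0.le]
    norm_num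
    nlinarith [sq_nonneg (m : ℝ), mul_le_mul_of_nonneg_left hmκ (sq_nonneg (m : ℝ))]
  refine Real.sSup_le ?_ (by linarith [ha.1])
  rintro ρ ⟨G', hfree, rfl⟩
  by_contra! hlt
  refine hfree ?_
  have haε : 0 < a + ε := by linarith [ha.1]
  set K := G'.spanningCoe with hK
  have hKR : K ≤ R d m := G'.spanningCoe_le
  have hKb : (a + ε) * edgeCount (R d m) ≤ edgeCount K := by
    rw [edgeCount_coe] at hlt
    rcases Nat.eq_zero_or_pos (edgeCount (R d m)) with h0 | h0
    · simp [h0]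
    · rw [lt_div_iff₀ (by exact_mod_cast h0)] at hlt
      exact hlt.le
  have : Nonempty (Fin m) := ⟨⟨0, hm1⟩⟩
  -- The boxes depend on `G'`, but `κ` does not, so `m₁` could be fixed beforehand.
  obtain ⟨P, hPne, hPκ, hPsum, hPreg⟩ := hbox (Fin m) (blockRel K)
    (Finset.univ.filter fun p : Cube d × Cube d => p.1 < p.2)
    fun p hp => (Finset.mem_filter.1 hp).2.ne
  simp only [Fintype.card_fin] at hPκ
  have hlev := levelSum_reducedGraph hd1 hm1 hKR hδ0.le haε.le hθ hI hII hKb P hPne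
    (fun x => hm23.trans (hPκ x)) hPsum
  set G := reducedGraph θ K P with hG
  have hdens : a + ε / 4 ≤
      1 / (d : ℝ) * ∑ ℓ ∈ Finset.Icc 1 d, (levelCount G ℓ : ℝ) / (tau d ℓ : ℝ) := by
    rw [one_div, inv_mul_eq_div, le_div_iff₀ hdpos]
    have h1 : (1 + δ) * (a + ε / 4) ≤ (a + ε) * (1 - δ) - ε / 4 := by
      nlinarith [ha.1, ha.2, mul_nonneg hδ0.le (sub_nonneg.2 ha.2), mul_pos hδ0 hε]
    have h2 := mul_le_mul_of_nonneg_right h1 hdpos.le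
    refine le_of_mul_le_mul_left ?_ (by positivity : 0 < 1 + δ)
    linarith
  have hedge : ∃ x y, G.Adj x y := by
    by_contra! hcon
    have h0 : ∀ ℓ, levelCount G ℓ = 0 := fun ℓ => by simp [levelCount, hcon]
    simp only [h0, Nat.cast_zero, zero_div, Finset.sum_const_zero, mul_zero] at hdens
    linarith [ha.1]
  have hsymm : ∀ (x y : Cube d) (i j : Fin m), blockRel K x y i j → blockRel K y x j i :=
    fun x y i j h => SimpleGraph.Adj.symm h
  have hregG : ∀ x y, G.Adj x y → ∀ A B : Finset (Fin m), A ⊆ P x → B ⊆ P y →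
      c * (P x).card ≤ A.card → c * (P y).card ≤ B.card →
      θ / 2 * (A.card * B.card) ≤
        ((A ×ˢ B).filter fun p => blockRel K x y p.1 p.2).card := by
    intro x y hxy A B hA hB hAc hBc
    -- Only pairs `x < y` enter the potential; the other half follows by symmetry, seen through
    -- `excess` at threshold `0`, which is the number of edges.
    rcases hxy.ne.lt_or_gt with h | h
    · exact hPreg x y (Finset.mem_filter.2 ⟨Finset.mem_univ _, h⟩) ((reducedGraph_adj_of_lt h).1 hxy) A B hA hB hAc hBc
    · have h1 := hPreg y x (Finset.mem_filter.2 ⟨Finset.mem_univ _, h⟩) ((reducedGraph_adj_of_lt h).1 hxy.symm) B A hB hA hBc hAc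
      have h2 := excess_comm (θ := 0) (blockRel K x y) A B
      have h3 : (fun a b => blockRel K x y b a) = blockRel K y x := by
        funext i j
        exact propext ⟨hsymm _ _ _ _, hsymm _ _ _ _⟩
      rw [h3, excess_eq, excess_eq] at h2
      simp only [zero_mul, sub_zero] at h2
      rw [h2, mul_comm (A.card : ℝ)]
      exact h1
  obtain ⟨f, hfmono, -, hfadj⟩ := exists_tuples k (by positivity : 0 < θ / 2) (by linarith) hc0
    (by
      rw [hc, ← mul_div_assoc, div_le_iff₀ (by positivity), mul_comm _ ((θ / 2) ^ M)]
      gcongr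
      linarith)
    (blockRel K) hsymm G.Adj (fun _ _ h => h.symm) (fun _ => G.irrefl) P
    (fun x => by
      have : ((k : ℝ) + 1) ≤ (P x).card := by linarith [hPκ x]
      exact_mod_cast this) hregG
  set o : α ≃o Fin k := (Fintype.orderIsoFinOfCardEq α rfl).symm
  refine containsOrderedCopy_of_tuples F G' G (fun x w => f x (o w))
    (fun x => (hfmono x).comp o.strictMono) (fun x y hxy w w' => ?_) hedge
    (hd₀ d ((le_max_left _ _).trans hd) G hdens)
  exact hfadj x y hxy (o w) (o w')
end

section
/- For every ordered graph F and every ε > 0 there exists C ∈ ℕ such that for every d ∈ ℕ, every (ρ_<(F) + ε, C)-rich graph on {0,1}^d contains an ordered copy of F. -/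
/-!
Fix a finite ordered graph `K` on `Fin n` with `ρ_<(F, K) < ρ_<(F) + ε / 2`. It suffices to map the
vertices of `K` monotonically into the cube so that at least a fraction `ρ_<(F) + ε / 2` of the
edges of `K` lands on edges of `G`: these edges form a subgraph of `K` too dense to be `F`-free.

The map is random. Cut `n L` rich levels into `n` consecutive blocks of length `L`, pick one level
`ℓ_t` uniformly from each block, and let `v_1 < … < v_n` be a random caterpillar branching at these
levels: `v_i` and `v_j` (`i < j`) agree before `ℓ_i`, where `v_i` reads `0` and `v_j` reads `1`; at
every `ℓ_t` the vertex `v_i` reads `1` if `t < i` and `0` otherwise; all remaining bits are uniform,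
common before the branching and independent after it (`vert`).

If the bits at the levels `ℓ_t`, `t ≠ i`, were uniform too, then `(v_i, v_j)` would be a uniformly
random pair of the rich level `ℓ_i`, hence an edge of `G` with probability at least `ρ_<(F) + ε`
(`le_expect_levelIndicator`). Forcing these bits costs little: reweightings attached to distinct
coordinates are uncorrelated, so forcing a random one of `L` coordinates lowers the average of a
`[0,1]`-valued function by `O(1 / √L)` (`expect_update_ge`, iterated over the blocks in
`expect_overwrite_ge`). Summing over the edges of `K` (`exists_vert`) gives the required map.
-/

open scoped Classical

open Finset
open scoped BigOperators

/-! ### Averages over product spaces and forced coordinates -/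

section Averaging

variable {ι β : Type*} [Fintype ι] [DecidableEq ι] [Fintype β]

/-- Resampling one coordinate does not change the average. -/
lemma expect_resample [Nonempty β] (p : ι) (h : (ι → β) → ℝ) :
    𝔼 x, 𝔼 b, h (Function.update x p b) = 𝔼 x, h x := by
  -- the involution `(x, b) ↦ (update x p b, x p)`
  have key : Function.Involutive
      (fun z : (ι → β) × β => (Function.update z.1 p z.2, z.1 p)) := by
    intro y; ext <;> simp
  have h1 : 𝔼 z : (ι → β) × β, h (Function.update z.1 p z.2) = 𝔼 z : (ι → β) × β, h z.1 :=
    Fintype.expect_equiv (Function.Involutive.toPerm _ key) _ _ (fun _ => rfl)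
  rw [← univ_product_univ, expect_product, expect_product] at h1
  simpa using h1

/-- Forcing the coordinate `p` to be `b` amounts to reweighting by `|β| · 1[x p = b]`. -/
lemma expect_update [DecidableEq β] [Nonempty β] (p : ι) (b : β) (h : (ι → β) → ℝ) :
    𝔼 x, h (Function.update x p b)
      = 𝔼 x, (Fintype.card β : ℝ) * (if x p = b then 1 else 0) * h x := by
  rw [← expect_resample p (fun x => (Fintype.card β : ℝ) * (if x p = b then 1 else 0) * h x)]
  refine expect_congr rfl fun x _ => ?_
  rw [Fintype.expect_eq_sum_div_card]
  have : (Fintype.card β : ℝ) ≠ 0 := by exact_mod_cast Fintype.card_ne_zero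
  simp [this]

/-- A bounded function cannot be correlated with many coordinates: forcing a random coordinate out
of `L` distinct ones lowers the average of a `[0,1]`-valued function by at most `η`, provided that
`η ≥ √(|β| / L)`.
The reweightings attached to distinct coordinates have mean one and are uncorrelated, so their mean
over `L` coordinates is close to one in `L²`. -/
lemma expect_update_ge [DecidableEq β] [Nonempty β] {L : ℕ} (c : Fin L → ι) (hc : Function.Injective c) (b : β)
    (f : (ι → β) → ℝ) (f0 : ∀ x, 0 ≤ f x) (f1 : ∀ x, f x ≤ 1)
    (η : ℝ) (hη : 0 < η) (hL : (Fintype.card β : ℝ) ≤ η ^ 2 * L) :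
    𝔼 x, f x - η ≤ 𝔼 k, 𝔼 x, f (Function.update x (c k) b) := by
  have hβ : (0 : ℝ) < Fintype.card β := by exact_mod_cast Fintype.card_pos
  have hL0 : 0 < L := by
    rcases Nat.eq_zero_or_pos L with h | h
    · subst h; simp at hL
    · exact h
  have : NeZero L := ⟨hL0.ne'⟩
  have hL0' : (0 : ℝ) < L := by exact_mod_cast hL0
  set ψ : Fin L → (ι → β) → ℝ :=
    fun k x => 1 - (Fintype.card β : ℝ) * (if x (c k) = b then 1 else 0) with hψ
  have hmul : ∀ k (h : (ι → β) → ℝ),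
      𝔼 x, ψ k x * h x = 𝔼 x, h x - 𝔼 x, h (Function.update x (c k) b) := by
    intro k h
    rw [expect_update, ← expect_sub_distrib]
    refine expect_congr rfl fun x _ => ?_
    simp only [hψ]; ring
  have hne : ∀ k l, k ≠ l → 𝔼 x, ψ k x * ψ l x = 0 := by
    intro k l hkl
    rw [hmul, sub_eq_zero]
    refine expect_congr rfl fun x _ => ?_
    have : c l ≠ c k := fun h => hkl (hc h).symm
    simp only [hψ, Function.update_of_ne this]
  have heq : ∀ k, 𝔼 x, ψ k x * ψ k x ≤ Fintype.card β := by
    intro k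
    rw [hmul]
    have h1 := hmul k (fun _ => 1)
    simp only [Fintype.expect_const, sub_self, mul_one] at h1
    rw [h1]
    simp [hψ]
  have hsq : 𝔼 x, (𝔼 k, ψ k x) ^ 2 ≤ η ^ 2 := by
    calc 𝔼 x, (𝔼 k, ψ k x) ^ 2 = 𝔼 k, 𝔼 l, 𝔼 x, ψ k x * ψ l x := by
          simp_rw [sq, Fintype.expect_mul_expect]
          rw [expect_comm]
          refine expect_congr rfl fun k _ => ?_
          rw [expect_comm]
      _ ≤ 𝔼 k : Fin L, 𝔼 l : Fin L, if k = l then (Fintype.card β : ℝ) else 0 := by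
          refine expect_le_expect fun k _ => expect_le_expect fun l _ => ?_
          split_ifs with h
          · subst h; exact heq k
          · exact (hne k l h).le
      _ = Fintype.card β / L := by
          have : ∀ k : Fin L, (𝔼 l : Fin L, if k = l then (Fintype.card β : ℝ) else 0)
              = Fintype.card β / L := by
            intro k; rw [Fintype.expect_eq_sum_div_card]; simp
          simp_rw [this]
          exact Fintype.expect_const _
      _ ≤ η ^ 2 := by rw [div_le_iff₀ hL0']; exact hL
  have hdiff : 𝔼 x, f x - 𝔼 k, 𝔼 x, f (Function.update x (c k) b)
      = 𝔼 x, f x * 𝔼 k, ψ k x := by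
    calc 𝔼 x, f x - 𝔼 k, 𝔼 x, f (Function.update x (c k) b)
        = 𝔼 k, 𝔼 x, ψ k x * f x := by
          simp_rw [hmul]
          rw [expect_sub_distrib, Fintype.expect_const]
      _ = _ := by
          rw [expect_comm]
          refine expect_congr rfl fun x _ => ?_
          rw [← expect_mul, mul_comm]
  -- arithmetic-geometric mean: `f u ≤ η / 2 + u ^ 2 / (2 η)`
  have hle : 𝔼 x, f x * 𝔼 k, ψ k x ≤ 𝔼 x : ι → β, (η / 2 + (𝔼 k, ψ k x) ^ 2 / (2 * η)) := by
    refine expect_le_expect fun x _ => ?_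
    set u := 𝔼 k, ψ k x
    have : η / 2 + u ^ 2 / (2 * η) - f x * u
        = ((u - η * f x) ^ 2 + η ^ 2 * (1 - f x ^ 2)) / (2 * η) := by field_simp; ring
    have h2 : 0 ≤ 1 - f x ^ 2 := by nlinarith [f0 x, f1 x]
    have : 0 ≤ η / 2 + u ^ 2 / (2 * η) - f x * u := by rw [this]; positivity
    linarith
  have hfin : 𝔼 x : ι → β, (η / 2 + (𝔼 k, ψ k x) ^ 2 / (2 * η)) ≤ η := by
    rw [expect_add_distrib, Fintype.expect_const, ← expect_div]
    have : (𝔼 x, (𝔼 k, ψ k x) ^ 2) / (2 * η) ≤ η / 2 := by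
      rw [div_le_iff₀ (by positivity)]; nlinarith
    linarith
  linarith

/-- `x` with all coordinates `c t (lam t)`, `t ∈ s`, overwritten by the pattern `B`. -/
noncomputable def overwrite {n L : ℕ} (c : Fin n → Fin L → ι) (B : ι → β) (s : Finset (Fin n))
    (lam : Fin n → Fin L) (x : ι → β) : ι → β :=
  fun p => if ∃ t ∈ s, c t (lam t) = p then B p else x p

/-- Iterating `expect_update_ge` over the blocks `t ∈ s`. The function may depend on the position
chosen in block `i`, provided that `i ∉ s`. -/
lemma expect_overwrite_ge [DecidableEq β] [Nonempty β] {n L : ℕ} (c : Fin n → Fin L → ι)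
    (hc : ∀ t, Function.Injective (c t)) (B : ι → β)
    (b : Fin n → β) (hB : ∀ t k, B (c t k) = b t) (i : Fin n)
    (f : Fin L → (ι → β) → ℝ) (f0 : ∀ k x, 0 ≤ f k x) (f1 : ∀ k x, f k x ≤ 1)
    (η : ℝ) (hη : 0 < η) (hL : (Fintype.card β : ℝ) ≤ η ^ 2 * L)
    (s : Finset (Fin n)) (hi : i ∉ s) :
    𝔼 lam : Fin n → Fin L, 𝔼 x, f (lam i) x - #s * η
      ≤ 𝔼 lam : Fin n → Fin L, 𝔼 x, f (lam i) (overwrite c B s lam x) := by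
  have hL0 : 0 < L := by
    rcases Nat.eq_zero_or_pos L with h | h
    · subst h
      simp at hL
    · exact h
  have : NeZero L := ⟨hL0.ne'⟩
  induction s using Finset.induction_on with
  | empty =>
    have : ∀ lam x, overwrite c B ∅ lam x = x := fun lam x => by ext p; simp [overwrite]
    simp [this]
  | insert t s hts ih =>
    have hit : i ≠ t := fun h => hi (by simp [h])
    have his : i ∉ s := fun h => hi (by simp [h])
    have step : 𝔼 lam : Fin n → Fin L, 𝔼 x, f (lam i) (overwrite c B s lam x) - η
        ≤ 𝔼 lam : Fin n → Fin L, 𝔼 x, f (lam i) (overwrite c B (insert t s) lam x) := by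
      rw [← expect_resample t
        (fun lam : Fin n → Fin L => 𝔼 x, f (lam i) (overwrite c B (insert t s) lam x))]
      rw [← Fintype.expect_const (ι := Fin n → Fin L) η, ← expect_sub_distrib]
      refine expect_le_expect fun lam _ => ?_
      refine (expect_update_ge (c t) (hc t) (b t) (fun x => f (lam i) (overwrite c B s lam x))
        (fun _ => f0 _ _) (fun _ => f1 _ _) η hη hL).trans (le_of_eq ?_)
      refine expect_congr rfl fun k _ => expect_congr rfl fun x _ => ?_
      rw [Function.update_of_ne hit]
      congr 1
      ext p
      have hs : ∀ r ∈ s, Function.update lam t k r = lam r := fun r hr =>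
        Function.update_of_ne (fun h : r = t => hts (h ▸ hr)) _ _
      have h1 : (∃ r ∈ insert t s, c r (Function.update lam t k r) = p)
          ↔ c t k = p ∨ ∃ r ∈ s, c r (lam r) = p := by
        simp only [mem_insert, exists_eq_or_imp, Function.update_self]
        refine or_congr Iff.rfl (exists_congr fun r => and_congr_right fun hr => by rw [hs r hr])
      simp only [overwrite, h1]
      by_cases h2 : ∃ r ∈ s, c r (lam r) = p
      · simp [h2]
      · by_cases h3 : c t k = p
        · subst h3; simp [h2, hB]
        · simp [h2, h3, Function.update_of_ne (Ne.symm h3)]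
    have := ih his
    rw [card_insert_of_notMem hts]
    push_cast
    linarith

/-- Averages are preserved by restricting a uniformly random function along an injection. -/
lemma expect_comp_injective {A B γ : Type*} [Fintype A] [DecidableEq A] [Fintype B] [DecidableEq B]
    [Fintype γ] [Nonempty γ] (σ : A → B) (hσ : Function.Injective σ) (h : (A → γ) → ℝ) :
    𝔼 q : B → γ, h (q ∘ σ) = 𝔼 x, h x := by
  classical
  let e : A ⊕ ((Set.range σ)ᶜ : Set B) ≃ B :=
    ((Equiv.ofInjective σ hσ).sumCongr (Equiv.refl _)).trans (Equiv.Set.sumCompl (Set.range σ))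
  let E : (B → γ) ≃ (A → γ) × (((Set.range σ)ᶜ : Set B) → γ) :=
    (e.arrowCongr (Equiv.refl γ)).symm.trans (Equiv.sumArrowEquivProdArrow _ _ _)
  rw [Fintype.expect_equiv E (fun q => h (q ∘ σ)) (fun z => h z.1)]
  · rw [← univ_product_univ, expect_product]
    simp
  · intro q
    congr 1

end Averaging

/-! ### Random pairs at a given level -/

section Levels

variable {d : ℕ}

/-- The lower endpoint of the level pair splitting at coordinate `l` (counted from `0`) that is
encoded by `x`; the lower endpoint is stored in the entries `x p false`. -/
def lowerPt (l : Fin d) (x : Fin d → Bool → Bool) : Cube d :=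
  toLex fun p => if p = l then false else x p false

/-- The upper endpoint of the level pair splitting at coordinate `l` that is encoded by `x`: it
shares the coordinates before `l` with `lowerPt l x`, and its later ones are the `x p true`. -/
def upperPt (l : Fin d) (x : Fin d → Bool → Bool) : Cube d :=
  toLex fun p => if p < l then x p false else if p = l then true else x p true

/-- The `0/1`-valued function telling whether the level pair encoded by `x` is an edge of `G`. -/
noncomputable def levelIndicator (G : SimpleGraph (Cube d)) (l : Fin d)
    (x : Fin d → Bool → Bool) : ℝ :=
  if G.Adj (lowerPt l x) (upperPt l x) then 1 else 0

lemma levelIndicator_nonneg (G : SimpleGraph (Cube d)) (l : Fin d) (x : Fin d → Bool → Bool) :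
    0 ≤ levelIndicator G l x := by
  unfold levelIndicator; split_ifs <;> norm_num

lemma levelIndicator_le_one (G : SimpleGraph (Cube d)) (l : Fin d) (x : Fin d → Bool → Bool) :
    levelIndicator G l x ≤ 1 := by
  unfold levelIndicator; split_ifs <;> norm_num

lemma bits_of_atLevel {l : Fin d} {x y : Cube d} (hlt : x < y) (h : atLevel ((l : ℕ) + 1) x y) :
    ofLex x l = false ∧ ofLex y l = true ∧ ∀ j < l, ofLex x j = ofLex y j := by
  obtain ⟨i, hi, hne, heq⟩ := h
  obtain rfl : i = l := Fin.ext (by omega)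
  obtain ⟨k, hk, hk'⟩ := hlt
  have hk1 : ofLex x k < ofLex y k := hk'
  have hki : k = i := by
    rcases lt_trichotomy k i with h | h | h
    · exact absurd (heq k h) hk1.ne
    · exact h
    · exact absurd (hk i h) hne
  subst hki
  rw [Bool.lt_iff] at hk1
  exact ⟨hk1.1, hk1.2, heq⟩

/-- Each level-`(l + 1)` edge is encoded by (at least) `2 ^ (l + 2)` arrays: the `l + 1` entries
`x p true` with `p ≤ l` and the entry `x l false` are free. -/
lemma levelCount_mul_le (G : SimpleGraph (Cube d)) (l : Fin d) :
    levelCount G ((l : ℕ) + 1) * 2 ^ ((l : ℕ) + 2)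
      ≤ #{x : Fin d → Bool → Bool | G.Adj (lowerPt l x) (upperPt l x)} := by
  let S := {p : Cube d × Cube d | p.1 < p.2 ∧ G.Adj p.1 p.2 ∧ atLevel ((l : ℕ) + 1) p.1 p.2}
  let Φ : S × ({p : Fin d // p ≤ l} → Bool) × Bool →
      {x : Fin d → Bool → Bool // G.Adj (lowerPt l x) (upperPt l x)} := fun z =>
    ⟨fun p s => match s with
      | false => if p = l then z.2.2 else ofLex z.1.1.1 p
      | true => if h : p ≤ l then z.2.1 ⟨p, h⟩ else ofLex z.1.1.2 p, by
      obtain ⟨⟨⟨X, Y⟩, hlt, hadj, hlev⟩, r, c⟩ := z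
      obtain ⟨hX, hY, hXY⟩ := bits_of_atLevel hlt hlev
      dsimp only at hX hY hXY hadj ⊢
      convert hadj using 1
      · refine ofLex.injective (funext fun p => ?_)
        by_cases hp : p = l
        · subst hp; simp [lowerPt, hX]
        · simp [lowerPt, hp]
      · refine ofLex.injective (funext fun p => ?_)
        rcases lt_trichotomy p l with hp | hp | hp
        · simp only [upperPt, ofLex_toLex, hp, hp.le, hp.ne, if_true, if_false]
          exact hXY p hp
        · subst hp; simp [upperPt, hY]
        · simp [upperPt, hp.not_gt, hp.ne', hp.not_ge]⟩
  have hΦ : Function.Injective Φ := by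
    rintro ⟨⟨⟨X, Y⟩, hlt, hadj, hlev⟩, r, c⟩ ⟨⟨⟨X', Y'⟩, hlt', hadj', hlev'⟩, r', c'⟩ h
    obtain ⟨hX, hY, hXY⟩ := bits_of_atLevel hlt hlev
    obtain ⟨hX', hY', hXY'⟩ := bits_of_atLevel hlt' hlev'
    have h' := congrArg Subtype.val h
    have h0 : ∀ p, (if p = l then c else ofLex X p) = (if p = l then c' else ofLex X' p) :=
      fun p => congrFun (congrFun h' p) false
    have h1 : ∀ p, (if h : p ≤ l then r ⟨p, h⟩ else ofLex Y p)
        = (if h : p ≤ l then r' ⟨p, h⟩ else ofLex Y' p) :=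
      fun p => congrFun (congrFun h' p) true
    dsimp only at hX hY hXY hX' hY' hXY'
    have eX : X = X' := ofLex.injective <| funext fun p => by
      by_cases hp : p = l
      · subst hp; rw [hX, hX']
      · simpa [hp] using h0 p
    have eY : Y = Y' := ofLex.injective <| funext fun p => by
      rcases lt_trichotomy p l with hp | hp | hp
      · rw [← hXY p hp, ← hXY' p hp, eX]
      · subst hp; rw [hY, hY']
      · simpa [hp.not_ge] using h1 p
    have ec : c = c' := by simpa using h0 l
    have er : r = r' := funext fun p => by simpa [p.2] using h1 p.1
    subst eX eY ec er
    rfl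
  have hcard := Nat.card_le_card_of_injective Φ hΦ
  have hS : Nat.card S = levelCount G ((l : ℕ) + 1) := Nat.card_coe_set_eq _
  have hI : Fintype.card {p : Fin d // p ≤ l} = (l : ℕ) + 1 := by
    rw [Fintype.card_subtype]
    have : (Finset.univ.filter fun p : Fin d => p ≤ l) = Finset.Iic l := by ext; simp
    rw [this, Fin.card_Iic]
  rw [Nat.card_prod, Nat.card_prod, hS, Nat.card_eq_fintype_card (α := _ → Bool),
    Fintype.card_fun, hI, Nat.card_eq_fintype_card, Nat.card_eq_fintype_card, Fintype.card_bool,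
    Fintype.card_subtype] at hcard
  calc _ = levelCount G ((l : ℕ) + 1) * (2 ^ ((l : ℕ) + 1) * 2) := by ring
    _ ≤ _ := hcard

/-- The level pair encoded by a uniformly random array is an edge of `G` with probability at least
`e_(l+1)(G) / τ`. -/
lemma le_expect_levelIndicator (G : SimpleGraph (Cube d)) (l : Fin d) {a : ℝ}
    (h : IsRichLevel G a ((l : ℕ) + 1)) : a ≤ 𝔼 x, levelIndicator G l x := by
  have hl := l.2
  have h1 := levelCount_mul_le G l
  have hcard : (Fintype.card (Fin d → Bool → Bool) : ℝ) = tau d ((l : ℕ) + 1) * 2 ^ ((l : ℕ) + 2) := by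
    have : Fintype.card (Fin d → Bool → Bool) = tau d ((l : ℕ) + 1) * 2 ^ ((l : ℕ) + 2) := by
      simp only [Fintype.card_fun, Fintype.card_bool, Fintype.card_fin, tau]
      rw [← pow_mul, ← pow_add]
      congr 1; omega
    exact_mod_cast this
  rw [Fintype.expect_eq_sum_div_card, hcard,
    le_div_iff₀ (mul_pos (by simp [tau]) (by positivity))]
  simp only [levelIndicator, sum_boole]
  calc a * (tau d ((l : ℕ) + 1) * 2 ^ ((l : ℕ) + 2))
      = (a * tau d ((l : ℕ) + 1)) * 2 ^ ((l : ℕ) + 2) := by ring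
    _ ≤ levelCount G ((l : ℕ) + 1) * 2 ^ ((l : ℕ) + 2) := by
        gcongr; exact h
    _ ≤ _ := by exact_mod_cast h1

end Levels

/-! ### The random caterpillar -/

section Caterpillar

variable {d n L : ℕ}

/-- Where the entries of an array encoding the pair `(v_i, v_j)` of random
vertices (see `vert`) are found among the random bits.
The entries `(p, true)` with `p < c i (lam i)` are irrelevant; they are sent to bits not used by
`v_i` to make the map injective. -/
def bitSource (c : Fin n → Fin L → Fin d) (lam : Fin n → Fin L) (i j : Fin n) :
    Fin d × Bool → Fin d × Option (Fin n) := fun z =>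
  (z.1, if z.1 < c i (lam i) then (if z.2 then some j else none)
    else if z.2 then (if z.1 < c j (lam j) then none else some j) else some i)

lemma bitSource_injective (c : Fin n → Fin L → Fin d) (lam : Fin n → Fin L) {i j : Fin n}
    (hij : i ≠ j) : Function.Injective (bitSource c lam i j) := by
  rintro ⟨p, s⟩ ⟨p', s'⟩ h
  obtain rfl : p = p' := congrArg Prod.fst h
  have h2 := congrArg Prod.snd h
  simp only [bitSource] at h2
  cases s <;> cases s' <;> simp at h2 ⊢ <;> split_ifs at h2 <;> simp_all

variable [NeZero L]

/-- The random vertex `v_i`, determined by the chosen coordinates `c t (lam t)` and the random bits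
`q`. At the chosen coordinates it reads `1 … 1 0 … 0`, the first `0` being at `c i (lam i)`. Before
that coordinate its other bits are the common bits `q (p, none)`, after it they are its private
bits `q (p, some i)`. -/
noncomputable def vert (c : Fin n → Fin L → Fin d) (lam : Fin n → Fin L)
    (q : Fin d × Option (Fin n) → Bool) (i : Fin n) : Cube d :=
  toLex fun p => if ∃ t, c t (lam t) = p then decide (p < c i 0)
    else if p < c i (lam i) then q (p, none) else q (p, some i)

lemma chosen_lt_iff {c : Fin n → Fin L → Fin d} (hmono : ∀ t, StrictMono (c t))
    (hlt : ∀ t t', t < t' → ∀ k k', c t k < c t' k') (t i : Fin n) (k : Fin L) :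
    c t k < c i 0 ↔ t < i := by
  rcases lt_trichotomy t i with h | h | h
  · simp [h, hlt t i h k 0]
  · subst h
    simp [(hmono t).le_iff_le]
  · simp [h.not_gt, (hlt i t h 0 k).le]

lemma vert_eq_of_lt {c : Fin n → Fin L → Fin d} (hmono : ∀ t, StrictMono (c t))
    (hlt : ∀ t t', t < t' → ∀ k k', c t k < c t' k') (lam : Fin n → Fin L)
    (q : Fin d × Option (Fin n) → Bool) {i j : Fin n} (hij : i < j) {p : Fin d}
    (hp : p < c i (lam i)) : ofLex (vert c lam q i) p = ofLex (vert c lam q j) p := by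
  simp only [vert, ofLex_toLex]
  split_ifs with h h1
  · obtain ⟨t, rfl⟩ := h
    have : t < i := by
      by_contra hti
      rcases (not_lt.1 hti).lt_or_eq with h | h
      · exact absurd hp (hlt i t h _ _).not_gt
      · subst h; exact lt_irrefl _ hp
    simp [chosen_lt_iff hmono hlt, this, this.trans hij]
  · rfl
  · exact absurd (hp.trans (hlt i j hij _ _)) h1

lemma vert_strictMono {c : Fin n → Fin L → Fin d} (hmono : ∀ t, StrictMono (c t))
    (hlt : ∀ t t', t < t' → ∀ k k', c t k < c t' k') (lam : Fin n → Fin L)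
    (q : Fin d × Option (Fin n) → Bool) : StrictMono (vert c lam q) := by
  intro i j hij
  refine ⟨c i (lam i), fun p hp => vert_eq_of_lt hmono hlt lam q hij hp, ?_⟩
  change ofLex (vert c lam q i) _ < ofLex (vert c lam q j) _
  simp [vert, chosen_lt_iff hmono hlt, hij]

/-- The values of `(v_i, v_j)` at the chosen coordinates, as an array. -/
def pattern (c : Fin n → Fin L → Fin d) (i j : Fin n) : Fin d → Bool → Bool :=
  fun p s => decide (p < c (if s then j else i) 0)

/-- The pair `(v_i, v_j)` is the level pair at `c i (lam i)` encoded by an array of independent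
random bits in which the other chosen coordinates have been overwritten. -/
lemma levelIndicator_vert {c : Fin n → Fin L → Fin d} (hmono : ∀ t, StrictMono (c t))
    (hlt : ∀ t t', t < t' → ∀ k k', c t k < c t' k') (G : SimpleGraph (Cube d))
    (lam : Fin n → Fin L) (q : Fin d × Option (Fin n) → Bool) {i j : Fin n} (hij : i < j) :
    levelIndicator G (c i (lam i)) (overwrite c (pattern c i j) (univ.erase i) lam
        (fun p s => q (bitSource c lam i j (p, s))))
      = if G.Adj (vert c lam q i) (vert c lam q j) then 1 else 0 := by
  have hex : ∀ p, p ≠ c i (lam i) →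
      ((∃ t ∈ univ.erase i, c t (lam t) = p) ↔ ∃ t, c t (lam t) = p) := by
    intro p hp
    constructor
    · rintro ⟨t, -, h⟩; exact ⟨t, h⟩
    · rintro ⟨t, h⟩
      refine ⟨t, ?_, h⟩
      simp only [mem_erase, mem_univ, and_true]
      rintro rfl; exact hp h.symm
  have hi : lowerPt (c i (lam i)) (overwrite c (pattern c i j) (univ.erase i) lam
        (fun p s => q (bitSource c lam i j (p, s)))) = vert c lam q i := by
    refine ofLex.injective (funext fun p => ?_)
    by_cases hp : p = c i (lam i)
    · subst hp
      simp [lowerPt, vert, chosen_lt_iff hmono hlt]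
    · simp only [lowerPt, vert, ofLex_toLex, overwrite, hex p hp, if_neg hp, bitSource]
      split_ifs <;> simp_all [pattern]
  have hj : upperPt (c i (lam i)) (overwrite c (pattern c i j) (univ.erase i) lam
        (fun p s => q (bitSource c lam i j (p, s)))) = vert c lam q j := by
    refine ofLex.injective (funext fun p => ?_)
    rcases lt_trichotomy p (c i (lam i)) with hp | hp | hp
    · rw [← vert_eq_of_lt hmono hlt lam q hij hp, ← hi]
      simp [upperPt, lowerPt, hp, hp.ne]
    · subst hp
      simp [upperPt, vert, chosen_lt_iff hmono hlt, hij]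
    · simp only [upperPt, vert, ofLex_toLex, overwrite, hex p hp.ne', if_neg hp.not_gt,
        if_neg hp.ne', bitSource]
      split_ifs <;> simp_all [pattern]
  rw [levelIndicator, hi, hj]

/-- For random levels and bits, `(v_i, v_j)` is an edge of `G` with probability almost the richness
of the levels: overwriting the at most `n` other chosen coordinates costs `η` each. -/
lemma expect_adj_vert_ge {c : Fin n → Fin L → Fin d} (hmono : ∀ t, StrictMono (c t))
    (hlt : ∀ t t', t < t' → ∀ k k', c t k < c t' k') (G : SimpleGraph (Cube d)) {a : ℝ}
    (hrich : ∀ t k, IsRichLevel G a ((c t k : ℕ) + 1))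
    (η : ℝ) (hη : 0 < η) (hL : 4 ≤ η ^ 2 * L) {i j : Fin n} (hij : i < j) :
    a - n * η ≤ 𝔼 lam : Fin n → Fin L, 𝔼 q : Fin d × Option (Fin n) → Bool,
      if G.Adj (vert c lam q i) (vert c lam q j) then (1 : ℝ) else 0 := by
  have h1 := expect_overwrite_ge c (fun t => (hmono t).injective) (pattern c i j)
    (fun t s => decide (t < if s then j else i))
    (fun t k => by ext s; simp [pattern, chosen_lt_iff hmono hlt]) i
    (fun k => levelIndicator G (c i k)) (fun _ _ => levelIndicator_nonneg _ _ _)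
    (fun _ _ => levelIndicator_le_one _ _ _) η hη (by simpa using by linarith)
    (univ.erase i) (by simp)
  have h2 : a ≤ 𝔼 lam : Fin n → Fin L, 𝔼 x, levelIndicator G (c i (lam i)) x := by
    rw [← Fintype.expect_const (ι := Fin n → Fin L) a]
    exact expect_le_expect fun lam _ => le_expect_levelIndicator G _ (hrich _ _)
  have h3 : (#(univ.erase i) : ℝ) * η ≤ n * η := by
    gcongr
    simp
  refine le_trans (by linarith) (h1.trans (le_of_eq ?_))
  refine expect_congr rfl fun lam _ => ?_
  simp_rw [← levelIndicator_vert hmono hlt G lam _ hij]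
  have h4 := expect_comp_injective (γ := Bool) (bitSource c lam i j)
    (bitSource_injective c lam hij.ne)
    (fun y => levelIndicator G (c i (lam i)) (overwrite c (pattern c i j) (univ.erase i) lam
        (fun p s => y (p, s))))
  refine Eq.trans ?_ h4.symm
  exact (Fintype.expect_equiv (Equiv.curry (Fin d) Bool Bool) _ _ fun y => rfl).symm

/-- First moment method: a graph with edge set `E` can be mapped into `G` monotonically with at
least a fraction `a - n η` of its edges preserved. -/
lemma exists_vert {c : Fin n → Fin L → Fin d} (hmono : ∀ t, StrictMono (c t))
    (hlt : ∀ t t', t < t' → ∀ k k', c t k < c t' k') (G : SimpleGraph (Cube d)) {a : ℝ}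
    (hrich : ∀ t k, IsRichLevel G a ((c t k : ℕ) + 1))
    (η : ℝ) (hη : 0 < η) (hL : 4 ≤ η ^ 2 * L)
    (E : Finset (Fin n × Fin n)) (hE : ∀ z ∈ E, z.1 < z.2) :
    ∃ v : Fin n → Cube d, StrictMono v ∧
      (a - n * η) * #E ≤ #{z ∈ E | G.Adj (v z.1) (v z.2)} := by
  by_contra! hcon
  have h1 : ∀ (lam : Fin n → Fin L) (q : Fin d × Option (Fin n) → Bool),
      (∑ z ∈ E, if G.Adj (vert c lam q z.1) (vert c lam q z.2) then (1 : ℝ) else 0)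
        < (a - n * η) * #E := by
    intro lam q
    rw [sum_boole]
    exact hcon _ (vert_strictMono hmono hlt lam q)
  have h2 : 𝔼 lam : Fin n → Fin L, 𝔼 q : Fin d × Option (Fin n) → Bool,
      (∑ z ∈ E, if G.Adj (vert c lam q z.1) (vert c lam q z.2) then (1 : ℝ) else 0)
        < (a - n * η) * #E := by
    have h0 : ∀ lam : Fin n → Fin L, 𝔼 q : Fin d × Option (Fin n) → Bool,
        (∑ z ∈ E, if G.Adj (vert c lam q z.1) (vert c lam q z.2) then (1 : ℝ) else 0)
          < (a - n * η) * #E := fun lam =>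
      expect_lt (fun q _ => (h1 lam q).le) ⟨fun _ => false, mem_univ _, h1 lam _⟩
    exact expect_lt (fun lam _ => (h0 lam).le) ⟨fun _ => 0, mem_univ _, h0 _⟩
  simp_rw [expect_sum_comm] at h2
  have h3 : ∑ z ∈ E, (a - n * η) ≤ _ := sum_le_sum fun z hz =>
    expect_adj_vert_ge hmono hlt G hrich η hη hL (hE z hz)
  rw [sum_const, nsmul_eq_mul, mul_comm] at h3
  exact absurd h2 (not_lt.2 h3)

end Caterpillar

/-! ### Dense subgraphs contain `F` -/

section EdgeCount

lemma edgeCount_eq_card_pairs {n : ℕ} (G : SimpleGraph (Fin n)) :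
    edgeCount G = #{z : Fin n × Fin n | z.1 < z.2 ∧ G.Adj z.1 z.2} := by
  have h : G.edgeSet = (fun z : Fin n × Fin n => s(z.1, z.2)) ''
      (({z : Fin n × Fin n | z.1 < z.2 ∧ G.Adj z.1 z.2} : Finset _) : Set (Fin n × Fin n)) := by
    ext e
    induction e with | _ u v
    simp only [SimpleGraph.mem_edgeSet, Set.mem_image, coe_filter, mem_univ, true_and,
      Set.mem_ofPred_eq]
    constructor
    · intro h
      rcases lt_or_gt_of_ne h.ne with huv | huv
      · exact ⟨(u, v), ⟨huv, h⟩, rfl⟩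
      · exact ⟨(v, u), ⟨huv, h.symm⟩, Sym2.eq_swap⟩
    · rintro ⟨z, ⟨-, hz⟩, he⟩
      rw [← SimpleGraph.mem_edgeSet, ← he]
      exact hz
  rw [edgeCount, h, Set.InjOn.ncard_image, Set.ncard_coe_finset]
  rintro ⟨u, v⟩ hz ⟨u', v'⟩ hz' he
  simp only [coe_filter, mem_univ, true_and, Set.mem_ofPred_eq] at hz hz'
  rcases Sym2.eq_iff.1 he with ⟨h1, h2⟩ | ⟨h1, h2⟩
  · simp_all
  · subst h1 h2; exact absurd hz.1 hz'.1.not_gt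

/-- A subgraph of `K` with more than `ρ_<(F, K) e(K)` edges contains `F`. -/
lemma containsOrderedCopy_of_lt {α : Type*} [Preorder α] (F : SimpleGraph α) {n : ℕ}
    (K H : SimpleGraph (Fin n)) (hHK : H ≤ K) (hK : 1 ≤ edgeCount K)
    (h : relTuranDensityIn F K * edgeCount K < edgeCount H) : ContainsOrderedCopy F H := by
  by_contra hcon
  have hK' : (0 : ℝ) < edgeCount K := by exact_mod_cast hK
  let H' : K.Subgraph := SimpleGraph.toSubgraph H hHK
  have hfree : ¬ ContainsOrderedCopy F H'.coe := by
    rintro ⟨φ, hφ, hadj⟩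
    exact hcon ⟨fun u => (φ u : Fin n), fun u v huv => hφ huv, fun u v huv => hadj u v huv⟩
  have hcount : edgeCount H'.coe = edgeCount H := by
    have h1 : H'.edgeSet = H.edgeSet := by
      ext e; induction e with | _ u v; rfl
    rw [edgeCount, edgeCount, ← h1, ← SimpleGraph.Subgraph.image_coe_edgeSet_coe,
      Set.ncard_image_of_injective _ (Sym2.map.injective Subtype.val_injective)]
  have hbdd : BddAbove {r : ℝ | ∃ G' : K.Subgraph, ¬ ContainsOrderedCopy F G'.coe ∧
      r = (edgeCount G'.coe : ℝ) / (edgeCount K : ℝ)} := by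
    refine ((Set.finite_range fun G' : K.Subgraph =>
      (edgeCount G'.coe : ℝ) / (edgeCount K : ℝ)).subset ?_).bddAbove
    rintro r ⟨G', -, rfl⟩
    exact ⟨G', rfl⟩
  have hle : (edgeCount H : ℝ) / edgeCount K ≤ relTuranDensityIn F K :=
    le_csSup hbdd ⟨H', hfree, by rw [hcount]⟩
  rw [div_le_iff₀ hK'] at hle
  linarith

end EdgeCount

/-- For every ordered graph `F` and every `ε > 0` there exists `C` such
that every `(ρ_<(F) + ε, C)`-rich graph on `{0,1}^d` contains an ordered copy of `F`. -/
theorem rich_above_rho_contains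
    {α : Type*} [Fintype α] [LinearOrder α] (F : SimpleGraph α)
    (ε : ℝ) (hε : 0 < ε) :
    ∃ C : ℕ, ∀ (d : ℕ) (G : SimpleGraph (Cube d)),
      IsRichGraph G (relTuranDensity F + ε) (C : ℝ) → ContainsOrderedCopy F G := by
  have hne : {r : ℝ | ∃ (n : ℕ) (K : SimpleGraph (Fin n)),
      1 ≤ edgeCount K ∧ r = relTuranDensityIn F K}.Nonempty := by
    refine ⟨_, 2, ⊤, ?_, rfl⟩
    rw [edgeCount_eq_card_pairs]
    exact card_pos.2 ⟨(0, 1), by simp⟩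
  obtain ⟨_, ⟨n, K, hK, rfl⟩, hKlt⟩ := exists_lt_of_csInf_lt hne
    (show sInf _ < relTuranDensity F + ε / 2 from lt_add_of_pos_right _ (half_pos hε))
  have hK' : (0 : ℝ) < edgeCount K := by exact_mod_cast hK
  -- `η` with `n η ≤ ε / 2`, and block length `L` with `√(4 / L) ≤ η`
  let η : ℝ := ε / (2 * (n + 1))
  have hη : 0 < η := by positivity
  have hnη : n * η ≤ ε / 2 := by
    have : n * η = ε / 2 * (n / (n + 1)) := by simp only [η]; field_simp
    rw [this]
    have : (n : ℝ) / (n + 1) ≤ 1 := by rw [div_le_one (by positivity)]; linarith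
    nlinarith
  obtain ⟨m, hm⟩ := exists_nat_gt (4 / η ^ 2)
  let L := m + 1
  have hL : 4 ≤ η ^ 2 * (L : ℝ) := by
    rw [div_lt_iff₀ (by positivity)] at hm
    simp only [L]; push_cast
    nlinarith [sq_nonneg η]
  refine ⟨n * L, fun d G hG => ?_⟩
  set a := relTuranDensity F + ε with ha
  let R : Finset (Fin d) := {l | IsRichLevel G a ((l : ℕ) + 1)}
  have hR : n * L ≤ #R := by
    have hsub : {ℓ : ℕ | ℓ ∈ Finset.Icc 1 d ∧ IsRichLevel G a ℓ}
        ⊆ ((R.image fun l : Fin d => (l : ℕ) + 1 : Finset ℕ) : Set ℕ) := by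
      rintro ℓ ⟨hℓ, hr⟩
      rw [mem_Icc] at hℓ
      have e : ℓ - 1 + 1 = ℓ := by omega
      simp only [coe_image, Set.mem_image, mem_coe, R, mem_filter, mem_univ, true_and]
      exact ⟨⟨ℓ - 1, by omega⟩, by simpa [e] using hr, e⟩
    have h1 : n * L ≤ {ℓ : ℕ | ℓ ∈ Finset.Icc 1 d ∧ IsRichLevel G a ℓ}.ncard := by
      have h2 : ((n * L : ℕ) : ℝ) ≤ 
          ({ℓ : ℕ | ℓ ∈ Finset.Icc 1 d ∧ IsRichLevel G a ℓ}.ncard : ℝ) := hG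
      exact_mod_cast h2
    calc n * L ≤ _ := h1
      _ ≤ _ := Set.ncard_le_ncard hsub (finite_toSet _)
      _ = #(R.image fun l : Fin d => (l : ℕ) + 1) := Set.ncard_coe_finset _
      _ ≤ #R := card_image_le
  -- the first `n * L` rich levels, cut into `n` consecutive blocks of length `L`
  let e := R.orderEmbOfCardLe hR
  let c : Fin n → Fin L → Fin d := fun t k => e (finProdFinEquiv (t, k))
  have hmono : ∀ t, StrictMono (c t) := by
    intro t k k' hk
    refine e.strictMono ?_
    rw [Fin.lt_def] at hk ⊢
    simpa [finProdFinEquiv] using hk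
  have hlt : ∀ t t', t < t' → ∀ k k', c t k < c t' k' := by
    intro t t' ht k k'
    refine e.strictMono ?_
    rw [Fin.lt_def] at ht ⊢
    have h1 : (t : ℕ) + 1 ≤ t' := ht
    have h2 := Nat.mul_le_mul_left L h1
    have hk := k.2
    simp only [finProdFinEquiv, Equiv.coe_fn_mk]
    rw [mul_add] at h2
    omega
  have hrich : ∀ t k, IsRichLevel G a ((c t k : ℕ) + 1) := by
    intro t k
    have := R.orderEmbOfCardLe_mem hR (finProdFinEquiv (t, k))
    simpa [R] using this
  obtain ⟨v, hv, hcount⟩ := exists_vert hmono hlt G hrich η hη hL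
    {z : Fin n × Fin n | z.1 < z.2 ∧ K.Adj z.1 z.2} (fun z hz => (mem_filter.1 hz).2.1)
  rw [← edgeCount_eq_card_pairs] at hcount
  let H : SimpleGraph (Fin n) := K ⊓ G.comap v
  have hH : edgeCount H = #{z ∈ ({z : Fin n × Fin n | z.1 < z.2 ∧ K.Adj z.1 z.2} : Finset _) |
      G.Adj (v z.1) (v z.2)} := by
    rw [edgeCount_eq_card_pairs, filter_filter]
    congr 1
    ext z
    simp [H, and_assoc]
  rw [← hH] at hcount
  obtain ⟨φ, hφ, hadj⟩ := containsOrderedCopy_of_lt F K H inf_le_left hK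
    (lt_of_lt_of_le (mul_lt_mul_of_pos_right (by linarith) hK') hcount)
  exact ⟨v ∘ φ, hv.comp hφ, fun u w huw => (hadj u w huw).2⟩
end
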